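/- arXiv:1411.3517 — 4 statements merged into one kernel-verified Lean document; each statement's English description precedes it below -/
import Mathlib

section
/- There exists a universal constant C > 0 such that for every μ ∈ (0,1), setting δ := μ^C and k := ⌈C·log(1/μ)⌉, the following holds for every R ≥ 1: for all functions A, B : F₃^R → [0,1], if E[A] > μ, E[B] > μ, and E[A(f)·B(f')] ≤ δ — where f is uniform on F₃^R and, independently for each coordinate i, f'_i is uniform on F₃ ∖ {f_i} — then there exists x ∈ {1,…,R} such that Inf_x^{≤k}(A) ≥ δ and Inf_x^{≤k}(B) ≥ δ. -/
open scoped BigOperators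

abbrev F3 := ZMod 3

noncomputable def ω : ℂ := Complex.exp (2 * (Real.pi : ℂ) * Complex.I / 3)

/-- The character `χ_α(f) = ω^{Σ_i α_i f_i}` on `F₃^R`. -/
noncomputable def chiV {R : ℕ} (α f : Fin R → F3) : ℂ := ω ^ (∑ i, α i * f i).val

/-- Support size `|α|`. -/
def suppV {R : ℕ} (α : Fin R → F3) : ℕ := (Finset.univ.filter fun i => α i ≠ 0).card

/-- Fourier coefficient `Â(α) = E_f[A(f)·conj(χ_α(f))]`. -/
noncomputable def fourierV {R : ℕ} (A : (Fin R → F3) → ℂ) (α : Fin R → F3) : ℂ :=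
  (∑ f, A f * (starRingEnd ℂ) (chiV α f)) / (3 : ℂ) ^ R

/-- Expectation over the uniform distribution on `F₃^R`. -/
noncomputable def expV {R : ℕ} (A : (Fin R → F3) → ℝ) : ℝ := (∑ f, A f) / 3 ^ R

/-- Degree-`k` influence `Inf_x^{≤k}(A)`. -/
noncomputable def infV {R : ℕ} (k : ℕ) (A : (Fin R → F3) → ℝ) (x : Fin R) : ℝ :=
  ∑ α ∈ Finset.univ.filter (fun α : Fin R → F3 => α x ≠ 0 ∧ suppV α ≤ k),
    ‖fourierV (fun f => (A f : ℂ)) α‖ ^ 2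


noncomputable section MajStab

variable {R : ℕ}

def kap (v : F3) : ℝ := if v = 0 then 2 else -1

def wS (S : Finset (Fin R)) (z : Fin R → F3) : ℝ := ∏ i, (if i ∈ S then kap (z i) else 1)

def PS (S : Finset (Fin R)) (f : (Fin R → F3) → ℝ) (x : Fin R → F3) : ℝ :=
  expV fun y => wS S (x - y) * f y

def MM (m : Finset (Fin R) → ℝ) (f : (Fin R → F3) → ℝ) (x : Fin R → F3) : ℝ :=
  ∑ S, m S * PS S f x

lemma expV_add (f g : (Fin R → F3) → ℝ) : expV (fun x => f x + g x) = expV f + expV g := by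
  simp [expV, Finset.sum_add_distrib, add_div]

lemma expV_sub (f g : (Fin R → F3) → ℝ) : expV (fun x => f x - g x) = expV f - expV g := by
  simp [expV, Finset.sum_sub_distrib, sub_div]

lemma expV_mul (c : ℝ) (f : (Fin R → F3) → ℝ) : expV (fun x => c * f x) = c * expV f := by
  simp [expV, ← Finset.mul_sum, mul_div_assoc]

lemma expV_const (c : ℝ) : expV (fun _ : Fin R → F3 => c) = c := by
  simp [expV]

lemma expV_mono {f g : (Fin R → F3) → ℝ} (h : ∀ x, f x ≤ g x) : expV f ≤ expV g := by
  unfold expV; gcongr with x; exact h x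

lemma expV_nonneg {f : (Fin R → F3) → ℝ} (h : ∀ x, 0 ≤ f x) : 0 ≤ expV f := by
  unfold expV; exact div_nonneg (Finset.sum_nonneg fun x _ => h x) (by positivity)

lemma expV_sum {ι : Type*} (s : Finset ι) (f : ι → (Fin R → F3) → ℝ) :
    expV (fun x => ∑ i ∈ s, f i x) = ∑ i ∈ s, expV (f i) := by
  unfold expV; rw [Finset.sum_comm, Finset.sum_div]

lemma expV_comm (F : (Fin R → F3) → (Fin R → F3) → ℝ) :
    expV (fun x => expV (fun y => F x y)) = expV (fun y => expV (fun x => F x y)) := by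
  unfold expV; simp only [← Finset.sum_div]; rw [Finset.sum_comm]

lemma expV_shift (f : (Fin R → F3) → ℝ) (a : Fin R → F3) :
    expV (fun x => f (x + a)) = expV f := by
  unfold expV; congr 1
  exact Fintype.sum_equiv (Equiv.addRight a) _ _ (fun x => rfl)

lemma expV_prod (g : Fin R → F3 → ℝ) :
    expV (fun x => ∏ i, g i (x i)) = ∏ i, ((∑ v, g i v) / 3) := by
  unfold expV
  rw [Finset.prod_div_distrib, Finset.prod_univ_sum]
  simp

lemma expV_CS {f g : (Fin R → F3) → ℝ} {a b : ℝ} (ha : 0 ≤ a) (hb : 0 ≤ b)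
    (hf : expV (fun x => f x ^ 2) ≤ a ^ 2) (hg : expV (fun x => g x ^ 2) ≤ b ^ 2) :
    |expV (fun x => f x * g x)| ≤ a * b := by
  apply abs_le_of_sq_le_sq _ (by positivity)
  calc (expV (fun x => f x * g x)) ^ 2
      ≤ expV (fun x => f x ^ 2) * expV (fun x => g x ^ 2) := by
        unfold expV
        rw [div_pow, div_mul_div_comm, ← sq]
        gcongr
        exact Finset.sum_mul_sq_le_sq_mul_sq _ _ _
    _ ≤ a ^ 2 * b ^ 2 := by
        gcongr
        exact expV_nonneg fun x => sq_nonneg _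
    _ = _ := by ring

lemma kap_neg (v : F3) : kap (-v) = kap v := by simp [kap]

lemma kap_sum : ∑ v, kap v = 0 := by
  simp only [kap]
  rw [show (Finset.univ : Finset F3) = {0, 1, 2} by decide]
  rw [Finset.sum_insert (by decide), Finset.sum_insert (by decide), Finset.sum_singleton]
  rw [if_pos rfl, if_neg (by decide), if_neg (by decide)]; norm_num

lemma kap_conv (u : F3) : ∑ v, kap (u - v) * kap v = 3 * kap u := by
  have h3 : ∀ f : F3 → ℝ, ∑ v, f v = f 0 + f 1 + f 2 := by
    intro f
    rw [show (Finset.univ : Finset F3) = {0, 1, 2} by decide,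
      Finset.sum_insert (by decide), Finset.sum_insert (by decide), Finset.sum_singleton, add_assoc]
  have k0 : kap 0 = 2 := by simp [kap]
  have k1 : kap 1 = -1 := by unfold kap; rw [if_neg (by decide)]
  have k2 : kap 2 = -1 := by unfold kap; rw [if_neg (by decide)]
  rw [h3]
  have : u = 0 ∨ u = 1 ∨ u = 2 := by revert u; decide
  rcases this with rfl | rfl | rfl
  · rw [show (0:F3) - 0 = 0 by decide, show (0:F3) - 1 = 2 by decide,
      show (0:F3) - 2 = 1 by decide, k0, k1, k2]; norm_num
  · rw [show (1:F3) - 0 = 1 by decide, show (1:F3) - 1 = 0 by decide,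
      show (1:F3) - 2 = 2 by decide, k0, k1, k2]; norm_num
  · rw [show (2:F3) - 0 = 2 by decide, show (2:F3) - 1 = 1 by decide,
      show (2:F3) - 2 = 0 by decide, k0, k1, k2]; norm_num

lemma wS_neg (S : Finset (Fin R)) (z : Fin R → F3) : wS S (-z) = wS S z := by
  simp [wS, kap_neg]

lemma wconv (S T : Finset (Fin R)) (x : Fin R → F3) :
    expV (fun y => wS S (x - y) * wS T y) = if S = T then wS S x else 0 := by
  have h1 : expV (fun y => wS S (x - y) * wS T y) =
      ∏ i, ((∑ v, (if i ∈ S then kap (x i - v) else 1) * (if i ∈ T then kap v else 1)) / 3) := by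
    rw [← expV_prod]
    congr 1; ext y; simp only [wS, ← Finset.prod_mul_distrib, Pi.sub_apply]
  have hs : ∀ u : F3, ∑ v, kap (u - v) = 0 := by
    intro u
    rw [← kap_sum]
    exact Fintype.sum_equiv (Equiv.subLeft u) _ _ (fun _ => rfl)
  rw [h1]
  split_ifs with h
  · subst h
    unfold wS
    apply Finset.prod_congr rfl
    intro i _
    by_cases hi : i ∈ S
    · simp only [hi, if_true, kap_conv]; ring
    · simp [hi]
  · have : ∃ i, ¬ (i ∈ S ↔ i ∈ T) := by
      by_contra hc; push Not at hc; exact h (Finset.ext hc)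
    obtain ⟨i, hi⟩ := this
    apply Finset.prod_eq_zero (Finset.mem_univ i)
    by_cases h1 : i ∈ S <;> by_cases h2 : i ∈ T
    · simp [h1, h2] at hi
    · simp [h1, h2, hs]
    · simp [h1, h2, kap_sum]
    · simp [h1, h2] at hi

lemma PS_PS (S T : Finset (Fin R)) (f : (Fin R → F3) → ℝ) (x : Fin R → F3) :
    PS S (PS T f) x = if S = T then PS S f x else 0 := by
  have : PS S (PS T f) x = expV fun z => expV (fun y => wS S ((x - z) - y) * wS T y) * f z := by
    unfold PS
    simp only [← expV_mul]
    rw [expV_comm]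
    congr 1; ext z
    rw [← expV_shift _ z, mul_comm, ← expV_mul]
    congr 1; ext y
    rw [add_sub_cancel_right, show x - (y + z) = x - z - y by abel]; ring
  rw [this]
  simp only [wconv]
  split_ifs
  · rfl
  · simp [expV_const]

lemma sum_prod_wS (c : Fin R → ℝ) (z : Fin R → F3) :
    ∑ S : Finset (Fin R), (∏ i ∈ S, c i) * wS S z = ∏ i, (1 + c i * kap (z i)) := by
  rw [Finset.prod_one_add, Finset.powerset_univ]
  apply Finset.sum_congr rfl
  intro S _
  rw [Finset.prod_mul_distrib, wS, Finset.prod_ite_mem, Finset.univ_inter]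

/-- product multipliers have product kernels -/
lemma MM_prod (c : Fin R → ℝ) (f : (Fin R → F3) → ℝ) (x : Fin R → F3) :
    MM (fun S => ∏ i ∈ S, c i) f x = expV fun y => (∏ i, (1 + c i * kap (x i - y i))) * f y := by
  unfold MM PS
  simp only [← expV_mul]
  rw [← expV_sum]
  congr 1; ext y
  have := sum_prod_wS c (x - y)
  simp only [Pi.sub_apply] at this
  rw [← this, Finset.sum_mul]
  exact Finset.sum_congr rfl fun S _ => by ring

lemma MM_one (f : (Fin R → F3) → ℝ) (x : Fin R → F3) : MM (fun _ => 1) f x = f x := by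
  have h := MM_prod (fun _ => 1) f x
  simp only [Finset.prod_const_one, one_mul] at h
  rw [h]
  have : ∀ y, (∏ i, (1 + kap (x i - y i))) = if y = x then (3:ℝ) ^ R else 0 := by
    intro y
    split_ifs with hy
    · subst hy; simp [kap]; norm_num
    · obtain ⟨i, hi⟩ := Function.ne_iff.1 hy
      apply Finset.prod_eq_zero (Finset.mem_univ i)
      simp [kap, sub_eq_zero, Ne.symm hi]
  simp only [this, expV]
  simp

lemma PS_symm (S : Finset (Fin R)) (f g : (Fin R → F3) → ℝ) :
    expV (fun x => PS S f x * g x) = expV (fun x => f x * PS S g x) := by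
  unfold PS
  simp only [mul_comm _ (g _), ← expV_mul]
  rw [expV_comm]
  congr 1; ext y
  congr 1; ext x
  rw [← wS_neg, neg_sub]; ring

lemma PS_add (S : Finset (Fin R)) (f g : (Fin R → F3) → ℝ) (x) :
    PS S (fun x => f x + g x) x = PS S f x + PS S g x := by
  unfold PS; rw [← expV_add]; congr 1; ext; ring

lemma PS_mul (S : Finset (Fin R)) (c : ℝ) (f : (Fin R → F3) → ℝ) (x) :
    PS S (fun x => c * f x) x = c * PS S f x := by
  unfold PS; rw [← expV_mul]; congr 1; ext; ring

lemma PS_sum {ι : Type*} (s : Finset ι) (S : Finset (Fin R)) (f : ι → (Fin R → F3) → ℝ) (x) :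
    PS S (fun x => ∑ i ∈ s, f i x) x = ∑ i ∈ s, PS S (f i) x := by
  unfold PS; rw [← expV_sum]; congr 1; ext; rw [Finset.mul_sum]

lemma PS_MM (S : Finset (Fin R)) (m : Finset (Fin R) → ℝ) (f : (Fin R → F3) → ℝ) (x) :
    PS S (MM m f) x = m S * PS S f x := by
  unfold MM
  rw [PS_sum]
  simp only [PS_mul, PS_PS]
  simp

lemma MM_MM (m l : Finset (Fin R) → ℝ) (f : (Fin R → F3) → ℝ) (x) :
    MM m (MM l f) x = MM (fun S => m S * l S) f x := by
  change ∑ S, m S * PS S (MM l f) x = ∑ S, (m S * l S) * PS S f x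
  simp only [PS_MM, mul_assoc]

lemma MM_sub (m : Finset (Fin R) → ℝ) (f g : (Fin R → F3) → ℝ) (x) :
    MM m (fun x => f x - g x) x = MM m f x - MM m g x := by
  have : ∀ S, PS S (fun x => f x - g x) x = PS S f x - PS S g x := by
    intro S; unfold PS; rw [← expV_sub]; congr 1; ext; ring
  simp only [MM, this, mul_sub, Finset.sum_sub_distrib]

lemma MM_symm (m : Finset (Fin R) → ℝ) (f g : (Fin R → F3) → ℝ) :
    expV (fun x => MM m f x * g x) = expV (fun x => f x * MM m g x) := by
  unfold MM
  simp only [Finset.sum_mul, Finset.mul_sum]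
  rw [expV_sum, expV_sum]
  apply Finset.sum_congr rfl
  intro S _
  simp only [mul_assoc, mul_left_comm (f _) (m S)]
  rw [expV_mul, expV_mul, PS_symm]

/-- energy at level `S` -/
def en (S : Finset (Fin R)) (f : (Fin R → F3) → ℝ) : ℝ := expV fun x => f x * PS S f x

lemma en_nonneg (S : Finset (Fin R)) (f : (Fin R → F3) → ℝ) : 0 ≤ en S f := by
  have : en S f = expV fun x => PS S f x * PS S f x := by
    rw [PS_symm]; unfold en; congr 1; ext x; rw [PS_PS, if_pos rfl]
  rw [this]
  exact expV_nonneg fun x => mul_self_nonneg _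

lemma MM_norm (m : Finset (Fin R) → ℝ) (f : (Fin R → F3) → ℝ) :
    expV (fun x => MM m f x ^ 2) = ∑ S, m S ^ 2 * en S f := by
  simp only [sq]
  rw [MM_symm]
  simp only [MM_MM]
  unfold MM en
  simp only [Finset.mul_sum]
  rw [expV_sum]
  apply Finset.sum_congr rfl
  intro S _
  rw [← expV_mul]; congr 1; ext; ring

lemma en_sum (f : (Fin R → F3) → ℝ) : ∑ S, en S f = expV (fun x => f x ^ 2) := by
  have := MM_norm (fun _ => 1) f
  simp only [MM_one, one_pow, one_mul] at this
  exact this.symm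

lemma MM_contract (m : Finset (Fin R) → ℝ) (hm : ∀ S, |m S| ≤ 1) (f : (Fin R → F3) → ℝ) :
    expV (fun x => MM m f x ^ 2) ≤ expV (fun x => f x ^ 2) := by
  rw [MM_norm, ← en_sum]
  apply Finset.sum_le_sum
  intro S _
  have := (sq_le_one_iff_abs_le_one _).2 (hm S)
  nlinarith [en_nonneg S f]

lemma expV_MM (m : Finset (Fin R) → ℝ) (f : (Fin R → F3) → ℝ) :
    expV (MM m f) = m ∅ * expV f := by
  have h := MM_symm m f (fun _ => 1)
  have h2 : ∀ x, MM m (fun _ : Fin R → F3 => (1:ℝ)) x = m ∅ := by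
    intro x
    have h0 : ∀ x, PS ∅ (fun _ : Fin R → F3 => (1:ℝ)) x = 1 := by
      intro x; simp [PS, wS, expV_const]
    have : (fun _ : Fin R → F3 => (1:ℝ)) = PS ∅ (fun _ : Fin R → F3 => (1:ℝ)) := by
      ext x; rw [h0]
    unfold MM
    rw [this]
    simp [PS_PS, h0]
  simp only [h2, mul_one, mul_comm _ (m ∅), expV_mul] at h
  exact h


lemma omega_cube : ω ^ 3 = 1 := by
  unfold ω
  rw [← Complex.exp_nat_mul]
  rw [show ((3:ℕ):ℂ) * (2 * (Real.pi:ℂ) * Complex.I / 3) = 2 * Real.pi * Complex.I by push_cast; ring]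
  exact Complex.exp_two_pi_mul_I

lemma omega_ne_one : ω ≠ 1 := by
  unfold ω
  intro h
  rw [Complex.exp_eq_one_iff] at h
  obtain ⟨n, hn⟩ := h
  have hpi : (2 * (Real.pi:ℂ) * Complex.I) ≠ 0 := Complex.two_pi_I_ne_zero
  have h3 : (2 * (Real.pi:ℂ) * Complex.I) * (3 * n - 1) = 0 := by linear_combination (-3) * hn
  rcases mul_eq_zero.1 h3 with h | h
  · exact hpi h
  · have : (3 * n - 1 : ℤ) = 0 := by exact_mod_cast h
    omega

lemma omega_sum : 1 + ω + ω ^ 2 = 0 := by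
  have h : (ω - 1) * (1 + ω + ω ^ 2) = 0 := by linear_combination omega_cube
  rcases mul_eq_zero.1 h with h | h
  · exact absurd (sub_eq_zero.1 h) omega_ne_one
  · exact h

def ech (v : F3) : ℂ := ω ^ v.val

lemma ech_add (u v : F3) : ech (u + v) = ech u * ech v := by
  unfold ech
  rw [ZMod.val_add, ← pow_add]
  conv_rhs => rw [← Nat.mod_add_div (u.val + v.val) 3, pow_add, pow_mul, omega_cube]
  simp

lemma ech_zero : ech 0 = 1 := by simp [ech]

lemma ech_norm (v : F3) : ‖ech v‖ = 1 := by
  unfold ech ω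
  rw [norm_pow, show 2 * (Real.pi : ℂ) * Complex.I / 3 = ((2 * Real.pi / 3 : ℝ) : ℂ) * Complex.I by
    push_cast; ring, Complex.norm_exp_ofReal_mul_I, one_pow]

lemma ech_conj (v : F3) : (starRingEnd ℂ) (ech v) = ech (-v) := by
  have h1 : ech v * ech (-v) = 1 := by rw [← ech_add, add_neg_cancel, ech_zero]
  have h2 : ech v * (starRingEnd ℂ) (ech v) = 1 := by
    rw [Complex.mul_conj, Complex.normSq_eq_norm_sq, ech_norm]; simp
  have h0 : ech v ≠ 0 := by intro h; rw [h] at h1; simp at h1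
  exact mul_left_cancel₀ h0 (h2.trans h1.symm)

lemma ech_sum {ι : Type*} (s : Finset ι) (g : ι → F3) : ech (∑ i ∈ s, g i) = ∏ i ∈ s, ech (g i) := by
  classical
  induction s using Finset.induction_on with
  | empty => simp [ech_zero]
  | insert a s ha ih => rw [Finset.sum_insert ha, Finset.prod_insert ha, ech_add, ih]

lemma chiV_eq (α f : Fin R → F3) : chiV α f = ∏ i, ech (α i * f i) := by
  rw [← ech_sum]; rfl

lemma chiV_conj_mul (α f g : Fin R → F3) :
    (starRingEnd ℂ) (chiV α f) * chiV α g = ∏ i, ech (α i * (g i - f i)) := by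
  rw [chiV_eq, chiV_eq, map_prod, ← Finset.prod_mul_distrib]
  apply Finset.prod_congr rfl
  intro i _
  rw [ech_conj, ← ech_add]; congr 1; ring

def lev (S : Finset (Fin R)) : Finset (Fin R → F3) :=
  Fintype.piFinset fun i => Finset.univ.filter fun v : F3 => (v ≠ 0 ↔ i ∈ S)

lemma sum_lev (S : Finset (Fin R)) (z : Fin R → F3) :
    ∑ α ∈ lev S, ∏ i, ech (α i * z i) = (wS S z : ℂ) := by
  unfold lev
  rw [← Finset.prod_univ_sum (fun i => Finset.univ.filter fun v : F3 => (v ≠ 0 ↔ i ∈ S))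
    (fun i v => ech (v * z i))]
  unfold wS
  push_cast
  apply Finset.prod_congr rfl
  intro i _
  by_cases hi : i ∈ S
  · simp only [hi, iff_true, if_true]
    rw [show (Finset.univ.filter fun v : F3 => v ≠ 0) = {1, 2} by decide,
      Finset.sum_pair (by decide)]
    generalize z i = u
    have e1 : ech 1 = ω := by
      unfold ech; rw [show (1:F3).val = 1 by decide, pow_one]
    have e2 : ech 2 = ω ^ 2 := by
      unfold ech; rw [show (2:F3).val = 2 by decide]
    have : u = 0 ∨ u = 1 ∨ u = 2 := by revert u; decide
    rcases this with rfl | rfl | rfl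
    · simp [ech_zero, kap]; norm_num
    · rw [show (1:F3) * 1 = 1 by decide, show (2:F3) * 1 = 2 by decide, e1, e2]
      unfold kap; rw [if_neg (by decide)]; push_cast
      linear_combination omega_sum
    · rw [show (1:F3) * 2 = 2 by decide, show (2:F3) * 2 = 1 by decide, e1, e2]
      unfold kap; rw [if_neg (by decide)]; push_cast
      linear_combination omega_sum
  · simp only [hi, iff_false, if_false, not_not]
    rw [Finset.filter_eq', if_pos (Finset.mem_univ _), Finset.sum_singleton]
    simp [ech_zero]

lemma norm_fourier (A : (Fin R → F3) → ℝ) (α : Fin R → F3) :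
    ((‖fourierV (fun f => (A f : ℂ)) α‖ ^ 2 : ℝ) : ℂ) =
      (∑ f, (∑ g, (∏ i, ech (α i * (f i - g i))) * (A g : ℂ)) / 3 ^ R * (A f : ℂ)) / 3 ^ R := by
  push_cast
  rw [← Complex.conj_mul']
  unfold fourierV
  simp only [map_div₀, map_sum, map_mul, Complex.conj_ofReal, Complex.conj_conj, map_pow]
  have h3 : (starRingEnd ℂ) (3:ℂ) = 3 := Complex.conj_ofNat 3
  rw [h3, div_mul_div_comm, Finset.sum_mul_sum]
  simp only [← Finset.sum_div, div_mul_eq_mul_div, div_div, Finset.sum_mul]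
  congr 1
  apply Finset.sum_congr rfl; intro f _
  apply Finset.sum_congr rfl; intro g _
  rw [← chiV_conj_mul]; ring

lemma sum_lev_norm (A : (Fin R → F3) → ℝ) (S : Finset (Fin R)) :
    ∑ α ∈ lev S, ‖fourierV (fun f => (A f : ℂ)) α‖ ^ 2 = en S A := by
  rw [← Complex.ofReal_inj]
  push_cast
  have := fun α => norm_fourier A α
  push_cast at this
  simp only [this]
  rw [← Finset.sum_div, Finset.sum_comm]
  unfold en PS expV
  push_cast
  congr 1
  apply Finset.sum_congr rfl; intro f _
  rw [← Finset.sum_mul, ← Finset.sum_div, Finset.sum_comm, mul_comm]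
  congr 2
  apply Finset.sum_congr rfl; intro g _
  rw [← Finset.sum_mul]
  congr 1
  exact sum_lev S (f - g)

lemma infV_eq (k : ℕ) (A : (Fin R → F3) → ℝ) (x : Fin R) :
    infV k A x = ∑ S ∈ Finset.univ.filter (fun S : Finset (Fin R) => x ∈ S ∧ S.card ≤ k), en S A := by
  unfold infV
  rw [← Finset.sum_fiberwise_of_maps_to (g := fun α : Fin R → F3 => Finset.univ.filter fun i => α i ≠ 0)
    (t := Finset.univ.filter (fun S : Finset (Fin R) => x ∈ S ∧ S.card ≤ k))]
  · apply Finset.sum_congr rfl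
    intro S hS
    rw [← sum_lev_norm]
    apply Finset.sum_congr _ fun _ _ => rfl
    ext α
    simp only [Finset.mem_filter, Finset.mem_univ, true_and] at hS
    simp only [Finset.mem_filter, Finset.mem_univ, true_and, lev, Fintype.mem_piFinset]
    constructor
    · intro h i
      replace h := h.2
      rw [← h]; simp
    · intro h
      have : (Finset.univ.filter fun i => α i ≠ 0) = S := by ext i; simp [← h]
      refine ⟨?_, this⟩
      have h2 : suppV α = S.card := by rw [← this]; rfl
      exact ⟨(h x).2 hS.1, h2 ▸ hS.2⟩
  · intro α hα
    simpa [suppV] using hα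

lemma infV_mono {k l : ℕ} (h : k ≤ l) (A : (Fin R → F3) → ℝ) (x : Fin R) :
    infV k A x ≤ infV l A x := by
  unfold infV
  apply Finset.sum_le_sum_of_subset_of_nonneg
  · intro α; simp only [Finset.mem_filter, Finset.mem_univ, true_and]
    exact fun h1 => ⟨h1.1, h1.2.trans h⟩
  · intros; positivity

lemma sum_infV (k : ℕ) (A : (Fin R → F3) → ℝ) :
    ∑ x, infV k A x ≤ k * expV (fun x => A x ^ 2) := by
  simp only [infV_eq, Finset.sum_filter]
  rw [Finset.sum_comm, ← en_sum, Finset.mul_sum]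
  apply Finset.sum_le_sum
  intro S _
  by_cases h : S.card ≤ k
  · simp only [h, and_true, ← Finset.sum_filter, Finset.sum_const, nsmul_eq_mul]
    gcongr
    · exact en_nonneg _ _
    · simpa using h
  · simp only [h, and_false, if_false, Finset.sum_const_zero]
    exact mul_nonneg (by positivity) (en_nonneg _ _)

lemma Ts_range {s : ℝ} (h0 : -1/2 ≤ s) (h1 : s ≤ 1) {A : (Fin R → F3) → ℝ}
    (hA : ∀ f, 0 ≤ A f ∧ A f ≤ 1) (x : Fin R → F3) :
    0 ≤ MM (fun S => s ^ S.card) A x ∧ MM (fun S => s ^ S.card) A x ≤ 1 := by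
  have he : (fun S : Finset (Fin R) => s ^ S.card) = fun S => ∏ i ∈ S, s := by
    ext S; simp
  have hk : ∀ y : Fin R → F3, 0 ≤ ∏ i, (1 + s * kap (x i - y i)) := by
    intro y
    apply Finset.prod_nonneg
    intro i _
    unfold kap; split_ifs <;> linarith
  rw [he, MM_prod]
  constructor
  · exact expV_nonneg fun y => mul_nonneg (hk y) (hA y).1
  · have : expV (fun y => (∏ i, (1 + s * kap (x i - y i))) * A y) ≤
        expV (fun y => (∏ i, (1 + s * kap (x i - y i)))) :=
      expV_mono fun y => mul_le_of_le_one_right (hk y) (hA y).2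
    refine this.trans (le_of_eq ?_)
    rw [expV_prod (fun i v => 1 + s * kap (x i - v))]
    apply Finset.prod_eq_one
    intro i _
    have hs : ∑ v, kap (x i - v) = 0 := by
      rw [← kap_sum]
      exact Fintype.sum_equiv (Equiv.subLeft (x i)) _ _ (fun _ => rfl)
    rw [Finset.sum_add_distrib, ← Finset.mul_sum, hs]
    simp

lemma hyp_eq (A B : (Fin R → F3) → ℝ) :
    (∑ f : Fin R → F3, ∑ g ∈ Finset.univ.filter (fun g : Fin R → F3 => ∀ i, g i ≠ 0),
      A f * B (f + g)) / (3 ^ R * 2 ^ R) =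
    expV (fun x => A x * MM (fun S => (-1/2 : ℝ) ^ S.card) B x) := by
  have he : (fun S : Finset (Fin R) => (-1/2 : ℝ) ^ S.card) = fun S => ∏ i ∈ S, (-1/2 : ℝ) := by
    ext S; rw [Finset.prod_const]
  rw [he]
  simp only [MM_prod]
  have h : ∀ x, expV (fun y => (∏ i, (1 + (-1/2:ℝ) * kap (x i - y i))) * B y) =
      (∑ g ∈ Finset.univ.filter (fun g : Fin R → F3 => ∀ i, g i ≠ 0), B (x + g)) / 2 ^ R := by
    intro x
    rw [← expV_shift _ x]
    have hk : ∀ y : Fin R → F3, (∏ i, (1 + (-1/2:ℝ) * kap (x i - (y + x) i))) =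
        if ∀ i, y i ≠ 0 then (3/2:ℝ) ^ R else 0 := by
      intro y
      have : ∀ i, x i - (y + x) i = - y i := by intro i; simp
      simp only [this, kap_neg]
      split_ifs with hy
      · have : ∀ i, 1 + (-1/2:ℝ) * kap (y i) = 3/2 := by
          intro i; unfold kap; rw [if_neg (hy i)]; norm_num
        simp only [this, Finset.prod_const, Finset.card_univ, Fintype.card_fin]
      · push Not at hy
        obtain ⟨i, hi⟩ := hy
        apply Finset.prod_eq_zero (Finset.mem_univ i)
        simp [kap, hi]
    simp only [hk]
    unfold expV
    rw [Finset.sum_filter, Finset.sum_div, Finset.sum_div]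
    apply Finset.sum_congr rfl
    intro y _
    rw [add_comm y x]
    split_ifs
    · rw [div_pow]; field_simp
    · simp
  simp only [h]
  unfold expV
  rw [Finset.sum_div, Finset.sum_div]
  apply Finset.sum_congr rfl
  intro f _
  rw [← Finset.mul_sum]; field_simp

/-- averaging over coordinate `i` -/
def Ei (i : Fin R) (f : (Fin R → F3) → ℝ) (x : Fin R → F3) : ℝ :=
  (∑ v : F3, f (x + Pi.single i v)) / 3

lemma wS_avg (S : Finset (Fin R)) (i : Fin R) (z : Fin R → F3) :
    ∑ v : F3, wS S (z + Pi.single i v) = if i ∈ S then 0 else 3 * wS S z := by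
  have h : ∀ v : F3, wS S (z + Pi.single i v) = (if i ∈ S then kap (z i + v) else 1) *
      ∏ j ∈ Finset.univ.erase i, (if j ∈ S then kap (z j) else 1) := by
    intro v
    unfold wS
    rw [← Finset.mul_prod_erase _ _ (Finset.mem_univ i)]
    congr 1
    · simp
    · apply Finset.prod_congr rfl
      intro j hj
      rw [Finset.mem_erase] at hj
      simp [Pi.single_eq_of_ne hj.1]
  simp only [h]
  rw [← Finset.sum_mul]
  split_ifs with hi
  · have : ∑ v, kap (z i + v) = 0 := by
      rw [← kap_sum]
      exact Fintype.sum_equiv (Equiv.addLeft (z i)) _ _ (fun _ => rfl)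
    rw [this, zero_mul]
  · unfold wS
    rw [← Finset.mul_prod_erase Finset.univ (fun j => if j ∈ S then kap (z j) else 1) (Finset.mem_univ i)]
    simp [hi]

lemma Ei_PS (S : Finset (Fin R)) (i : Fin R) (f : (Fin R → F3) → ℝ) (x) :
    Ei i (PS S f) x = if i ∈ S then 0 else PS S f x := by
  unfold Ei PS
  rw [← expV_sum]
  have : ∀ y, ∑ v : F3, wS S (x + Pi.single i v - y) * f y = (if i ∈ S then 0 else 3 * wS S (x - y)) * f y := by
    intro y
    rw [← wS_avg, Finset.sum_mul]
    apply Finset.sum_congr rfl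
    intro v _
    congr 2; abel
  simp only [this]
  split_ifs
  · simp [expV_const]
  · simp only [mul_assoc]; rw [expV_mul]; ring

lemma Ei_MM (i : Fin R) (m : Finset (Fin R) → ℝ) (f : (Fin R → F3) → ℝ) (x) :
    Ei i (MM m f) x = MM (fun S => if i ∈ S then 0 else m S) f x := by
  have : Ei i (MM m f) x = ∑ S, m S * Ei i (PS S f) x := by
    unfold Ei MM
    rw [Finset.sum_comm, Finset.sum_div]
    apply Finset.sum_congr rfl; intro S _
    rw [← Finset.mul_sum]; ring
  rw [this]
  simp only [Ei_PS]
  unfold MM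
  apply Finset.sum_congr rfl; intro S _
  by_cases hi : i ∈ S <;> simp [hi]

lemma Ei_inv (i : Fin R) (f : (Fin R → F3) → ℝ) (x) (u : F3) :
    Ei i f (x + Pi.single i u) = Ei i f x := by
  unfold Ei
  congr 1
  refine Fintype.sum_equiv (Equiv.addLeft u) _ _ (fun v => ?_)
  simp only [Equiv.coe_addLeft, Pi.single_add, add_assoc]

/-- orthogonality: functions invariant in direction `i` do not see `f - Ei f` -/
lemma Ei_orth (i : Fin R) (f φ : (Fin R → F3) → ℝ) (hφ : ∀ x u, φ (x + Pi.single i u) = φ x) :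
    expV (fun x => φ x * f x) = expV (fun x => φ x * Ei i f x) := by
  have h : ∀ v : F3, expV (fun x => φ x * f (x + Pi.single i v)) = expV (fun x => φ x * f x) := by
    intro v
    rw [← expV_shift (fun x => φ x * f x) (Pi.single i v)]
    simp only [hφ]
  have : expV (fun x => φ x * Ei i f x) = (∑ v : F3, expV (fun x => φ x * f (x + Pi.single i v))) / 3 := by
    rw [← expV_sum]
    rw [div_eq_inv_mul, ← expV_mul]
    congr 1; ext x
    unfold Ei; rw [← Finset.mul_sum]; ring
  rw [this]
  simp [h]


lemma Ei_update (i : Fin R) (f : (Fin R → F3) → ℝ) (x) :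
    Ei i f x = (∑ v : F3, f (Function.update x i v)) / 3 := by
  unfold Ei
  congr 1
  refine Fintype.sum_equiv (Equiv.addLeft (x i)) _ _ (fun v => ?_)
  congr 1
  ext j
  by_cases hj : j = i
  · subst hj; simp
  · simp [hj]

lemma expV_Ei (i : Fin R) (f : (Fin R → F3) → ℝ) : expV (Ei i f) = expV f := by
  have := Ei_orth i f (fun _ => 1) (fun _ _ => rfl)
  simpa using this.symm

lemma expV_update (i : Fin R) (f : (Fin R → F3) → ℝ) :
    expV f = (∑ v : F3, expV (fun x => f (Function.update x i v))) / 3 := by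
  rw [← expV_sum, ← expV_Ei i f, div_eq_inv_mul, ← expV_mul]
  congr 1; ext x; rw [Ei_update]; ring

def Deg (J : Finset (Fin R)) (k : ℕ) : Submodule ℝ ((Fin R → F3) → ℝ) :=
  Submodule.span ℝ {f | ∃ S : Finset (Fin R), S ⊆ J ∧ S.card ≤ k ∧ DependsOn f (S : Set (Fin R))}

lemma Deg_const {J : Finset (Fin R)} {k : ℕ} (h : J = ∅ ∨ k = 0) {f : (Fin R → F3) → ℝ}
    (hf : f ∈ Deg J k) : ∃ c, ∀ x, f x = c := by
  unfold Deg at hf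
  induction hf using Submodule.span_induction with
  | mem f hf =>
    obtain ⟨S, hS, hk, hd⟩ := hf
    have : S = ∅ := by
      rcases h with h | h
      · subst h; exact Finset.subset_empty.1 hS
      · subst h; simpa using hk
    subst this
    exact ⟨f 0, fun x => hd (by simp)⟩
  | zero => exact ⟨0, fun _ => rfl⟩
  | add f g _ _ hf hg =>
    obtain ⟨a, ha⟩ := hf
    obtain ⟨b, hb⟩ := hg
    exact ⟨a + b, fun x => by simp [ha, hb]⟩
  | smul c f _ hf =>
    obtain ⟨a, ha⟩ := hf
    exact ⟨c * a, fun x => by simp [ha]⟩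

def EiL (i : Fin R) : ((Fin R → F3) → ℝ) →ₗ[ℝ] ((Fin R → F3) → ℝ) where
  toFun f := Ei i f
  map_add' f g := by ext x; simp [Ei, Finset.sum_add_distrib, add_div]
  map_smul' c f := by ext x; simp [Ei, ← Finset.mul_sum, mul_div_assoc]

def UpL (i : Fin R) (v : F3) : ((Fin R → F3) → ℝ) →ₗ[ℝ] ((Fin R → F3) → ℝ) where
  toFun f := fun x => f (Function.update x i v)
  map_add' _ _ := rfl
  map_smul' _ _ := rfl

lemma Deg_Ei {J : Finset (Fin R)} {k : ℕ} (i : Fin R) {f : (Fin R → F3) → ℝ}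
    (hf : f ∈ Deg (insert i J) k) : Ei i f ∈ Deg J k := by
  suffices Deg (insert i J) k ≤ (Deg J k).comap (EiL i) from this hf
  unfold Deg
  rw [Submodule.span_le]
  rintro f ⟨S, hS, hk, hd⟩
  apply Submodule.subset_span
  refine ⟨S.erase i, ?_, (Finset.card_erase_le).trans hk, ?_⟩
  · intro j hj
    rw [Finset.mem_erase] at hj
    exact (Finset.mem_insert.1 (hS hj.2)).resolve_left hj.1
  · intro x y hxy
    change Ei i f x = Ei i f y
    rw [Ei_update, Ei_update]
    congr 1
    apply Finset.sum_congr rfl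
    intro v _
    apply hd
    intro j hj
    by_cases hji : j = i
    · subst hji; simp
    · simp only [ne_eq, hji, not_false_eq_true, Function.update_of_ne]
      exact hxy j (by simp [hji]; exact hj)

lemma Deg_Up {J : Finset (Fin R)} {k : ℕ} (i : Fin R) (v : F3) {f : (Fin R → F3) → ℝ}
    (hf : f ∈ Deg (insert i J) (k + 1)) :
    (fun x => f (Function.update x i v) - Ei i f (Function.update x i v)) ∈ Deg J k := by
  suffices Deg (insert i J) (k + 1) ≤ (Deg J k).comap (UpL i v ∘ₗ (LinearMap.id - EiL i)) from this hf
  unfold Deg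
  rw [Submodule.span_le]
  rintro f ⟨S, hS, hk, hd⟩
  by_cases hi : i ∈ S
  · apply Submodule.subset_span
    refine ⟨S.erase i, ?_, ?_, ?_⟩
    · intro j hj
      rw [Finset.mem_erase] at hj
      exact (Finset.mem_insert.1 (hS hj.2)).resolve_left hj.1
    · rw [Finset.card_erase_of_mem hi]; omega
    · intro x y hxy
      change f (Function.update x i v) - Ei i f (Function.update x i v) =
        f (Function.update y i v) - Ei i f (Function.update y i v)
      have key : ∀ u, f (Function.update x i u) = f (Function.update y i u) := by
        intro u
        apply hd
        intro j hj
        by_cases hji : j = i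
        · subst hji; simp
        · simp only [ne_eq, hji, not_false_eq_true, Function.update_of_ne]
          exact hxy j (by simp [hji]; exact hj)
      rw [Ei_update, Ei_update]
      simp [key]
  · have : (UpL i v ∘ₗ (LinearMap.id - EiL i)) f = 0 := by
      ext x
      change f (Function.update x i v) - Ei i f (Function.update x i v) = 0
      rw [Ei_update]
      have key : ∀ u, f (Function.update x i u) = f x := by
        intro u
        apply hd
        intro j hj
        have hji : j ≠ i := by rintro rfl; exact hi hj
        simp [hji]
      simp [key]
    change (UpL i v ∘ₗ (LinearMap.id - EiL i)) f ∈ Deg J k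
    rw [this]
    exact Submodule.zero_mem _

lemma bonami (J : Finset (Fin R)) : ∀ (k : ℕ) (f : (Fin R → F3) → ℝ), f ∈ Deg J k →
    expV (fun x => f x ^ 4) ≤ 16 ^ k * expV (fun x => f x ^ 2) ^ 2 := by
  have hconst : ∀ (k : ℕ) (f : (Fin R → F3) → ℝ), (∃ c, ∀ x, f x = c) →
      expV (fun x => f x ^ 4) ≤ 16 ^ k * expV (fun x => f x ^ 2) ^ 2 := by
    rintro k f ⟨c, hc⟩
    simp only [hc, expV_const]
    have : (1:ℝ) ≤ 16 ^ k := one_le_pow₀ (by norm_num)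
    nlinarith [sq_nonneg (c ^ 2)]
  induction J using Finset.induction_on with
  | empty => exact fun k f hf => hconst k f (Deg_const (Or.inl rfl) hf)
  | insert i J hi ih =>
    intro k f hf
    rcases k with _ | k
    · exact hconst 0 f (Deg_const (Or.inr rfl) hf)
    set g := Ei i f with hg
    set h : (Fin R → F3) → ℝ := fun x => f x - g x with hh
    have hginv : ∀ x u, g (x + Pi.single i u) = g x := fun x u => Ei_inv i f x u
    have hgup : ∀ x v, g (Function.update x i v) = g x := by
      intro x v
      rw [← hginv x (v - x i)]
      congr 1
      ext j
      by_cases hj : j = i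
      · subst hj; simp
      · simp [hj]
    have horth : ∀ φ : (Fin R → F3) → ℝ, (∀ x u, φ (x + Pi.single i u) = φ x) →
        expV (fun x => φ x * h x) = 0 := by
      intro φ hφ
      simp only [hh, mul_sub]
      rw [expV_sub, Ei_orth i f φ hφ, sub_self]
    set a := expV (fun x => g x ^ 2) with ha
    set b := expV (fun x => h x ^ 2) with hb
    have ha0 : 0 ≤ a := expV_nonneg fun x => sq_nonneg _
    have hfg : ∀ x, f x = g x + h x := fun x => by simp [hh]
    have hsq : expV (fun x => f x ^ 2) = a + b := by
      have : (fun x => f x ^ 2) = fun x => (g x ^ 2 + 2 * (g x * h x)) + h x ^ 2 := by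
        ext x; rw [hfg]; ring
      rw [this, expV_add, expV_add, expV_mul, horth g hginv]; ring
    have hg4 : expV (fun x => g x ^ 4) ≤ 16 ^ (k + 1) * a ^ 2 := ih (k + 1) g (Deg_Ei i hf)
    set bv : F3 → ℝ := fun v => expV (fun x => h (Function.update x i v) ^ 2) with hbv
    have hbv0 : ∀ v, 0 ≤ bv v := fun v => expV_nonneg fun x => sq_nonneg _
    have hbs : ∑ v, bv v = 3 * b := by
      rw [hb, expV_update i (fun x => h x ^ 2)]; ring
    have hv4 : ∀ v, expV (fun x => h (Function.update x i v) ^ 4) ≤ 16 ^ k * bv v ^ 2 :=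
      fun v => ih k _ (Deg_Up i v hf)
    have hh4 : expV (fun x => h x ^ 4) ≤ 16 ^ k * (3 * b ^ 2) := by
      rw [expV_update i (fun x => h x ^ 4)]
      have h1 : ∑ v, expV (fun x => h (Function.update x i v) ^ 4) ≤ 16 ^ k * ∑ v, bv v ^ 2 := by
        rw [Finset.mul_sum]; exact Finset.sum_le_sum fun v _ => hv4 v
      have h2 : ∑ v, bv v ^ 2 ≤ (∑ v, bv v) ^ 2 :=
        Finset.sum_sq_le_sq_sum_of_nonneg fun v _ => hbv0 v
      rw [hbs] at h2
      have h3 : (16:ℝ) ^ k * ∑ v, bv v ^ 2 ≤ 16 ^ k * (3 * b) ^ 2 := by gcongr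
      linarith
    have hgh : expV (fun x => g x ^ 2 * h x ^ 2) ≤ 4 * 16 ^ k * (a * b) := by
      rw [expV_update i (fun x => g x ^ 2 * h x ^ 2)]
      have h1 : ∀ v, expV (fun x => g (Function.update x i v) ^ 2 * h (Function.update x i v) ^ 2) ≤
          (4 ^ (k + 1) * a) * (4 ^ k * bv v) := by
        intro v
        simp only [hgup]
        refine (le_abs_self _).trans (expV_CS (by positivity) (mul_nonneg (by positivity) (hbv0 v)) ?_ ?_)
        · simp only [← pow_mul]
          refine hg4.trans (le_of_eq ?_)
          rw [mul_pow, ← pow_mul, mul_comm (k+1) 2, pow_mul]; norm_num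
        · simp only [← pow_mul]
          refine (hv4 v).trans (le_of_eq ?_)
          rw [mul_pow, ← pow_mul, mul_comm k 2, pow_mul]; norm_num
      have h2 := Finset.sum_le_sum (s := Finset.univ) fun v _ => h1 v
      rw [← Finset.mul_sum, ← Finset.mul_sum, hbs] at h2
      have h16 : (16:ℝ) ^ k = 4 ^ k * 4 ^ k := by rw [← mul_pow]; norm_num
      rw [h16]
      rw [pow_succ] at h2
      linarith
    have hmain : expV (fun x => f x ^ 4) ≤ expV (fun x => g x ^ 4) +
        8 * expV (fun x => g x ^ 2 * h x ^ 2) + 3 * expV (fun x => h x ^ 4) := by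
      have h0 : expV (fun x => g x ^ 3 * h x) = 0 := horth (fun x => g x ^ 3) (by simp [hginv])
      have : expV (fun x => f x ^ 4) ≤ expV (fun x => ((g x ^ 4 + 4 * (g x ^ 3 * h x)) +
          8 * (g x ^ 2 * h x ^ 2)) + 3 * h x ^ 4) := by
        apply expV_mono
        intro x
        rw [hfg]
        nlinarith [sq_nonneg (g x * h x - h x ^ 2)]
      rw [expV_add, expV_add, expV_add, expV_mul, expV_mul, expV_mul, h0] at this
      linarith
    rw [hsq]
    have h16 : (0:ℝ) < 16 ^ k := by positivity
    rw [pow_succ] at hg4 ⊢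
    nlinarith [mul_nonneg h16.le (sq_nonneg b)]

lemma PS_Deg (S : Finset (Fin R)) (f : (Fin R → F3) → ℝ) {k : ℕ} (hk : S.card ≤ k) :
    PS S f ∈ Deg Finset.univ k := by
  apply Submodule.subset_span
  refine ⟨S, Finset.subset_univ _, hk, ?_⟩
  intro x y hxy
  unfold PS wS
  congr 1; ext z; congr 1
  apply Finset.prod_congr rfl
  intro i _
  split_ifs with hi
  · rw [Pi.sub_apply, Pi.sub_apply, hxy i hi]
  · rfl

lemma MM_Deg (m : Finset (Fin R) → ℝ) (f : (Fin R → F3) → ℝ) {k : ℕ}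
    (hm : ∀ S, k < S.card → m S = 0) : MM m f ∈ Deg Finset.univ k := by
  have : MM m f = ∑ S, m S • PS S f := by
    ext x; simp [MM, Finset.sum_apply]
  rw [this]
  apply Submodule.sum_mem
  intro S _
  by_cases h : S.card ≤ k
  · exact Submodule.smul_mem _ _ (PS_Deg S f h)
  · rw [hm S (by omega), zero_smul]; exact Submodule.zero_mem _

/-- third moment bound -/
lemma third_moment (k : ℕ) {f : (Fin R → F3) → ℝ} (hf : f ∈ Deg Finset.univ k) {d : ℝ} (hd : 0 < d)
    (h2 : expV (fun x => f x ^ 2) ≤ d ^ 2) :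
    expV (fun x => |f x| ^ 3) ≤ 4 ^ k * d * expV (fun x => f x ^ 2) := by
  have h4 := bonami _ k f hf
  set e := expV (fun x => f x ^ 2)
  have he : 0 ≤ e := expV_nonneg fun x => sq_nonneg _
  set t : ℝ := 4 ^ k * d with ht
  have ht0 : 0 < t := by positivity
  have h3 : expV (fun x => |f x| ^ 3) ≤ expV (fun x => (t / 2) * f x ^ 2 + (1 / (2 * t)) * f x ^ 4) := by
    apply expV_mono
    intro x
    have e2 : f x ^ 2 = |f x| ^ 2 := (sq_abs _).symm
    have e4 : f x ^ 4 = |f x| ^ 4 := by rw [show 4 = 2 * 2 by norm_num, pow_mul, pow_mul, sq_abs]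
    rw [e2, e4]
    generalize |f x| = y
    have : (t / 2) * y ^ 2 + (1 / (2 * t)) * y ^ 4 - y ^ 3 = y ^ 2 * (t - y) ^ 2 / (2 * t) := by
      field_simp; ring
    have h0 : 0 ≤ y ^ 2 * (t - y) ^ 2 / (2 * t) := by positivity
    linarith
  rw [expV_add, expV_mul, expV_mul] at h3
  have h16 : (16:ℝ) ^ k = 4 ^ k * 4 ^ k := by rw [← mul_pow]; norm_num
  have h5 : expV (fun x => f x ^ 4) ≤ t ^ 2 * e := by
    refine h4.trans ?_
    rw [h16, ht]
    have : e ^ 2 ≤ d ^ 2 * e := by nlinarith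
    calc 4 ^ k * 4 ^ k * e ^ 2 ≤ 4 ^ k * 4 ^ k * (d ^ 2 * e) := by gcongr
      _ = _ := by ring
  have h6 : 1 / (2 * t) * expV (fun x => f x ^ 4) ≤ 1 / (2 * t) * (t ^ 2 * e) := by gcongr
  have h7 : 1 / (2 * t) * (t ^ 2 * e) = t / 2 * e := by field_simp
  linarith


def pc (t : ℝ) : ℝ := max t 0 ^ 3

lemma pc3_aux (g h : ℝ) (hh : 0 ≤ h) :
    |pc (g + h) - pc (g - h) - 6 * (max g 0) ^ 2 * h| ≤ 2 * h ^ 3 := by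
  unfold pc
  have h3 : 0 ≤ h ^ 3 := by positivity
  rcases le_total (g - h) 0 with h1 | h1
  · rw [max_eq_right h1]
    rcases le_total (g + h) 0 with h2 | h2
    · rw [max_eq_right h2, max_eq_right (by linarith)]
      simp only [ne_eq, OfNat.ofNat_ne_zero, not_false_eq_true, zero_pow, sub_self, mul_zero, zero_mul, abs_zero]
      positivity
    · rw [max_eq_left h2]
      rcases le_total g 0 with h4 | h4
      · rw [max_eq_right h4]
        have : (g + h) ^ 3 ≤ h ^ 3 := by gcongr; linarith
        have : 0 ≤ (g + h) ^ 3 := by positivity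
        rw [abs_le]; constructor <;> nlinarith
      · rw [max_eq_left h4]
        obtain ⟨d, rfl⟩ : ∃ d, h = g + d := ⟨h - g, by ring⟩
        have hd : 0 ≤ d := by linarith
        have e : (g + (g + d)) ^ 3 - 0 ^ 3 - 6 * g ^ 2 * (g + d) = 2 * (g+d)^3 - d ^ 3 := by ring
        rw [e]
        have : d ^ 3 ≤ (g + d) ^ 3 := by gcongr; linarith
        have : 0 ≤ d ^ 3 := by positivity
        rw [abs_le]; constructor <;> nlinarith
  · have e : (g + h) ^ 3 - (g - h) ^ 3 - 6 * g ^ 2 * h = 2 * h ^ 3 := by ring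
    rw [max_eq_left h1, max_eq_left (by linarith : 0 ≤ g), max_eq_left (by linarith : 0 ≤ g + h), e,
      abs_of_nonneg (by positivity)]

lemma pc3 (g h : ℝ) : |pc (g + h) - pc (g - h) - 6 * (max g 0) ^ 2 * h| ≤ 2 * |h| ^ 3 := by
  rcases le_total 0 h with hh | hh
  · rw [abs_of_nonneg hh]; exact pc3_aux g h hh
  · have := pc3_aux g (-h) (by linarith)
    rw [abs_of_nonpos hh]
    rw [← sub_eq_add_neg, sub_neg_eq_add, ← abs_neg] at this
    convert this using 2
    ring

def phi (u : ℝ) : ℝ := (pc u - pc (u - 1)) / 3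

def Psi (t : ℝ) : ℝ := phi (t - 1) + phi (-t)

def dPsi (g : ℝ) : ℝ :=
  2 * ((max (g - 1) 0) ^ 2 - (max (g - 1 - 1) 0) ^ 2 - (max (-g) 0) ^ 2 + (max (-g - 1) 0) ^ 2)

lemma Psi3 (g h : ℝ) : Psi (g - h) ≤ Psi (g + h) - dPsi g * h + 3 * |h| ^ 3 := by
  have h1 := abs_le.1 (pc3 (g - 1) h)
  have h2 := abs_le.1 (pc3 (g - 1 - 1) h)
  have h3 := abs_le.1 (pc3 (-g) (-h))
  have h4 := abs_le.1 (pc3 (-g - 1) (-h))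
  rw [abs_neg] at h3 h4
  have h5 : 0 ≤ |h| ^ 3 := by positivity
  unfold Psi phi dPsi
  rw [show g - h - 1 = g - 1 - h by ring, show g - 1 - h - 1 = g - 1 - 1 - h by ring,
    show g + h - 1 = g - 1 + h by ring, show g - 1 + h - 1 = g - 1 - 1 + h by ring,
    show -(g - h) = -g - -h by ring, show -g - -h - 1 = -g - 1 - -h by ring,
    show -(g + h) = -g + -h by ring, show -g + -h - 1 = -g - 1 + -h by ring]
  linarith [h1.1, h1.2, h2.1, h2.2, h3.1, h3.2, h4.1, h4.2]

lemma phi_neg {u : ℝ} (hu : u ≤ 0) : phi u = 0 := by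
  unfold phi pc; rw [max_eq_right hu, max_eq_right (by linarith)]; simp

lemma phi_mid {u : ℝ} (h0 : 0 ≤ u) (hu : u ≤ 1) : phi u = u ^ 3 / 3 := by
  unfold phi pc; rw [max_eq_left h0, max_eq_right (by linarith)]; simp

lemma phi_big {u : ℝ} (hu : 1 ≤ u) : phi u = u ^ 2 - u + 1 / 3 := by
  unfold phi pc; rw [max_eq_left (by linarith), max_eq_left (by linarith)]; ring

lemma phi_le {u : ℝ} (h0 : 0 ≤ u) : phi u ≤ u ^ 2 := by
  rcases le_total u 1 with h | h
  · rw [phi_mid h0 h]; nlinarith [sq_nonneg u]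
  · rw [phi_big h]; linarith

lemma phi_ge {u η : ℝ} (h0 : 0 ≤ u) (hη : 0 < η) (hη1 : η ≤ 1) : u ^ 2 ≤ η ^ 2 + 3 * phi u / η := by
  rcases le_total u 1 with h | h
  · rw [phi_mid h0 h]
    rcases le_total u η with h1 | h1
    · have : u ^ 2 ≤ η ^ 2 := by gcongr
      have : 0 ≤ 3 * (u ^ 3 / 3) / η := by positivity
      linarith
    · have : u ^ 2 ≤ 3 * (u ^ 3 / 3) / η := by
        rw [le_div_iff₀ hη]; nlinarith [sq_nonneg u]
      nlinarith [sq_nonneg η]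
  · rw [phi_big h]
    have : u ^ 2 ≤ 3 * (u ^ 2 - u + 1 / 3) / η := by
      rw [le_div_iff₀ hη]; nlinarith [sq_nonneg u]
    nlinarith [sq_nonneg η]

lemma Psi_le {t q : ℝ} (h0 : 0 ≤ q) (h1 : q ≤ 1) : Psi t ≤ (t - q) ^ 2 := by
  unfold Psi
  rcases le_total t 0 with h | h
  · rw [phi_neg (by linarith : t - 1 ≤ 0)]
    have := phi_le (by linarith : 0 ≤ -t)
    nlinarith
  · rw [phi_neg (by linarith : -t ≤ 0)]
    rcases le_total t 1 with h2 | h2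
    · rw [phi_neg (by linarith : t - 1 ≤ 0)]; nlinarith [sq_nonneg (t - q)]
    · have := phi_le (by linarith : 0 ≤ t - 1)
      nlinarith

def clip (t : ℝ) : ℝ := max 0 (min t 1)

lemma clip_nonneg (t : ℝ) : 0 ≤ clip t := le_max_left _ _
lemma clip_le (t : ℝ) : clip t ≤ 1 := max_le zero_le_one (min_le_right _ _)

lemma clip_dist {t η : ℝ} (hη : 0 < η) (hη1 : η ≤ 1) : (t - clip t) ^ 2 ≤ η ^ 2 + 3 / η * Psi t := by
  unfold clip Psi
  rcases le_total t 0 with h | h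
  · rw [phi_neg (by linarith : t - 1 ≤ 0), min_eq_left (by linarith), max_eq_left h]
    have := phi_ge (by linarith : 0 ≤ -t) hη hη1
    rw [mul_div_right_comm] at this
    rw [zero_add, sub_zero, ← neg_sq]; exact this
  · rw [phi_neg (by linarith : -t ≤ 0)]
    rcases le_total t 1 with h2 | h2
    · rw [phi_neg (by linarith : t - 1 ≤ 0), min_eq_left h2, max_eq_right h]
      simp; positivity
    · have := phi_ge (by linarith : 0 ≤ t - 1) hη hη1
      rw [mul_div_right_comm] at this
      rw [min_eq_right h2, max_eq_right zero_le_one, add_zero]; exact this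

/-- flipped, smoothed multiplier -/
def mF (s : ℝ) (F : Finset (Fin R)) (S : Finset (Fin R)) : ℝ := (-1) ^ (S ∩ F).card * s ^ S.card

/-- low-degree version -/
def mL (s : ℝ) (k : ℕ) (F : Finset (Fin R)) (S : Finset (Fin R)) : ℝ :=
  if S.card ≤ k then mF s F S else 0

lemma mF_sq (s : ℝ) (F S : Finset (Fin R)) : mF s F S ^ 2 = (s ^ 2) ^ S.card := by
  unfold mF
  rw [mul_pow, ← pow_mul, mul_comm _ 2, pow_mul, neg_one_sq, one_pow, one_mul, ← pow_mul, ← pow_mul,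
    mul_comm]

lemma mF_insert (s : ℝ) {F : Finset (Fin R)} {i : Fin R} (hi : i ∉ F) (S : Finset (Fin R)) :
    mF s (insert i F) S = if i ∈ S then - mF s F S else mF s F S := by
  unfold mF
  split_ifs with h
  · rw [Finset.inter_insert_of_mem h, Finset.card_insert_of_notMem (by simp [hi]), pow_succ]; ring
  · rw [Finset.inter_insert_of_notMem h]

lemma lindeberg_step {s : ℝ} (hs0 : 0 ≤ s) (hs1 : s ≤ 1) (k : ℕ) (A : (Fin R → F3) → ℝ)
    {F : Finset (Fin R)} {i : Fin R} (hi : i ∉ F) {d : ℝ} (hd : 0 < d) (hI : infV k A i ≤ d ^ 2) :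
    expV (fun x => Psi (MM (mL s k (insert i F)) A x)) ≤
      expV (fun x => Psi (MM (mL s k F) A x)) + 3 * (4 ^ k * d) * infV k A i := by
  set L := MM (mL s k F) A with hL
  set g := Ei i L with hg
  set h : (Fin R → F3) → ℝ := MM (fun S => if i ∈ S then mL s k F S else 0) A with hh
  have hgM : ∀ x, g x = MM (fun S => if i ∈ S then 0 else mL s k F S) A x := fun x => Ei_MM i _ A x
  have hLgh : ∀ x, L x = g x + h x := by
    intro x
    rw [hgM, hh, hL]; unfold MM
    rw [← Finset.sum_add_distrib]
    apply Finset.sum_congr rfl; intro S _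
    by_cases hS : i ∈ S <;> simp [hS]
  have hIgh : ∀ x, MM (mL s k (insert i F)) A x = g x - h x := by
    intro x
    rw [hgM, hh]; unfold MM
    rw [← Finset.sum_sub_distrib]
    apply Finset.sum_congr rfl; intro S _
    unfold mL; rw [mF_insert s hi]
    by_cases hS : i ∈ S <;> by_cases hk : S.card ≤ k <;> simp [hS, hk]
  have hdeg : h ∈ Deg Finset.univ k := by
    apply MM_Deg
    intro S hS
    simp [mL, not_le.2 hS]
  have h2 : expV (fun x => h x ^ 2) ≤ infV k A i := by
    rw [hh, MM_norm, infV_eq, Finset.sum_filter]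
    apply Finset.sum_le_sum
    intro S _
    by_cases hS : i ∈ S <;> by_cases hk : S.card ≤ k
    · simp only [hS, hk, and_self, if_true, mL, mF_sq]
      have : (s ^ 2) ^ S.card ≤ 1 := pow_le_one₀ (by positivity) (by nlinarith)
      nlinarith [en_nonneg S A]
    all_goals simp [hS, hk, mL]
  have h3 := third_moment k hdeg hd (h2.trans hI)
  have horth : expV (fun x => dPsi (g x) * h x) = 0 := by
    have : (fun x => dPsi (g x) * h x) = fun x => dPsi (g x) * L x - dPsi (g x) * g x := by
      ext x; rw [hLgh]; ring
    rw [this, expV_sub, Ei_orth i L (fun x => dPsi (g x)), sub_self]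
    intro x u
    rw [hg]; simp only [Ei_inv]
  have hm : expV (fun x => Psi (MM (mL s k (insert i F)) A x)) ≤
      expV (fun x => (Psi (L x) - dPsi (g x) * h x) + 3 * |h x| ^ 3) := by
    apply expV_mono
    intro x
    rw [hIgh, hLgh]
    exact Psi3 _ _
  rw [expV_add, expV_sub, expV_mul, horth] at hm
  have : 4 ^ k * d * expV (fun x => h x ^ 2) ≤ 4 ^ k * d * infV k A i := by gcongr
  linarith

lemma infV_nonneg (k : ℕ) (A : (Fin R → F3) → ℝ) (x : Fin R) : 0 ≤ infV k A x := by
  unfold infV; positivity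

lemma lindeberg {s : ℝ} (hs0 : 0 ≤ s) (hs1 : s ≤ 1) (k : ℕ) (A : (Fin R → F3) → ℝ)
    {d : ℝ} (hd : 0 < d) (F : Finset (Fin R)) (hI : ∀ i ∈ F, infV k A i ≤ d ^ 2) :
    expV (fun x => Psi (MM (mL s k F) A x)) ≤
      expV (fun x => Psi (MM (mL s k ∅) A x)) + 3 * (4 ^ k * d) * ∑ i ∈ F, infV k A i := by
  induction F using Finset.induction_on with
  | empty => simp
  | insert i F hi ih =>
    have h1 := ih fun j hj => hI j (Finset.mem_insert_of_mem hj)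
    have h2 := lindeberg_step hs0 hs1 k A hi hd (hI i (Finset.mem_insert_self _ _))
    rw [Finset.sum_insert hi]
    linarith

lemma sq_mean_le {A : (Fin R → F3) → ℝ} (hA : ∀ f, 0 ≤ A f ∧ A f ≤ 1) :
    expV (fun x => A x ^ 2) ≤ 1 := by
  rw [← expV_const (R := R) 1]
  exact expV_mono fun x => by nlinarith [hA x]

lemma tail_bound {s : ℝ} (hs0 : 0 ≤ s) (hs1 : s ≤ 1) (k : ℕ) {A : (Fin R → F3) → ℝ}
    (hA : ∀ f, 0 ≤ A f ∧ A f ≤ 1) (F : Finset (Fin R)) :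
    expV (fun x => (MM (mL s k F) A x - MM (mF s F) A x) ^ 2) ≤ (s ^ 2) ^ k := by
  have : ∀ x, MM (mL s k F) A x - MM (mF s F) A x = MM (fun S => mL s k F S - mF s F S) A x := by
    intro x; unfold MM; rw [← Finset.sum_sub_distrib]
    exact Finset.sum_congr rfl fun S _ => by ring
  simp only [this]
  rw [MM_norm]
  have hs : s ^ 2 ≤ 1 := by nlinarith
  calc _ ≤ ∑ S, (s ^ 2) ^ k * en S A := by
        apply Finset.sum_le_sum
        intro S _
        apply mul_le_mul_of_nonneg_right _ (en_nonneg _ _)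
        unfold mL
        split_ifs with h
        · simp; positivity
        · rw [zero_sub, neg_sq, mF_sq]
          exact pow_le_pow_of_le_one (by positivity) hs (by omega)
    _ = (s ^ 2) ^ k * expV (fun x => A x ^ 2) := by rw [← Finset.mul_sum, en_sum]
    _ ≤ _ := mul_le_of_le_one_right (by positivity) (sq_mean_le hA)

/-- The flipped smoothed function is close to its clipped low degree part. -/
lemma near {s : ℝ} (hs0 : 0 ≤ s) (hs1 : s ≤ 1) (k : ℕ) {A : (Fin R → F3) → ℝ}
    (hA : ∀ f, 0 ≤ A f ∧ A f ≤ 1) {d : ℝ} (hd : 0 < d) (F : Finset (Fin R))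
    (hI : ∀ i ∈ F, infV k A i ≤ d ^ 2) {η : ℝ} (hη : 0 < η) (hη1 : η ≤ 1)
    (hsm : (s ^ 2) ^ k + 3 * (4 ^ k * d) * k ≤ η ^ 3) :
    expV (fun x => (MM (mF s F) A x - clip (MM (mL s k F) A x)) ^ 2) ≤ (4 * η) ^ 2 := by
  have hl := lindeberg hs0 hs1 k A hd F hI
  have hsum : ∑ i ∈ F, infV k A i ≤ k := by
    calc _ ≤ ∑ i, infV k A i :=
          Finset.sum_le_sum_of_subset_of_nonneg (Finset.subset_univ _) fun i _ _ => infV_nonneg _ _ _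
      _ ≤ k * expV (fun x => A x ^ 2) := sum_infV k A
      _ ≤ k := mul_le_of_le_one_right (by positivity) (sq_mean_le hA)
  have h0 : expV (fun x => Psi (MM (mL s k ∅) A x)) ≤ (s ^ 2) ^ k := by
    refine le_trans (expV_mono fun x => ?_) (tail_bound hs0 hs1 k hA ∅)
    have e : mF s (∅ : Finset (Fin R)) = fun S => s ^ S.card := by ext S; simp [mF]
    have := Ts_range (by linarith) hs1 hA x
    rw [e]
    exact Psi_le this.1 this.2
  have h1 : expV (fun x => Psi (MM (mL s k F) A x)) ≤ η ^ 3 := by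
    have : 3 * (4 ^ k * d) * ∑ i ∈ F, infV k A i ≤ 3 * (4 ^ k * d) * k := by gcongr
    linarith
  have h2 : expV (fun x => (MM (mL s k F) A x - clip (MM (mL s k F) A x)) ^ 2) ≤ 4 * η ^ 2 := by
    have : expV (fun x => (MM (mL s k F) A x - clip (MM (mL s k F) A x)) ^ 2) ≤
        expV (fun x => η ^ 2 + 3 / η * Psi (MM (mL s k F) A x)) :=
      expV_mono fun x => clip_dist hη hη1
    rw [expV_add, expV_const, expV_mul] at this
    have h3 : 3 / η * expV (fun x => Psi (MM (mL s k F) A x)) ≤ 3 / η * η ^ 3 := by gcongr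
    have h4 : 3 / η * η ^ 3 = 3 * η ^ 2 := by field_simp
    linarith
  have h3 := tail_bound hs0 hs1 k hA F
  have h4 : (s ^ 2) ^ k ≤ η ^ 2 := by
    have : 0 ≤ 3 * (4 ^ k * d) * k := by positivity
    have : η ^ 3 ≤ η ^ 2 := pow_le_pow_of_le_one hη.le hη1 (by norm_num)
    linarith
  have h5 : expV (fun x => (MM (mF s F) A x - clip (MM (mL s k F) A x)) ^ 2) ≤
      expV (fun x => 2 * (MM (mL s k F) A x - MM (mF s F) A x) ^ 2 +
        2 * (MM (mL s k F) A x - clip (MM (mL s k F) A x)) ^ 2) := by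
    apply expV_mono
    intro x
    nlinarith [sq_nonneg ((MM (mL s k F) A x - MM (mF s F) A x) + (MM (mL s k F) A x - clip (MM (mL s k F) A x)))]
  rw [expV_add, expV_mul, expV_mul] at h5
  nlinarith [sq_nonneg η]


lemma bern6 (y : ℝ) : 1 + 6 * (y - 1) ≤ y ^ 6 := by
  nlinarith [sq_nonneg (y - 1), sq_nonneg (y ^ 2 - 1), sq_nonneg (y ^ 3 - 1), sq_nonneg (y * (y - 1)), sq_nonneg (y^2 - y)]

lemma pow6_ge {x : ℝ} (hx : 0 ≤ x) : 1 + 6 * (x - 1) + 5 * (x - 1) ^ 2 ≤ x ^ 6 := by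
  have e : x ^ 6 - (1 + 6 * (x - 1) + 5 * (x - 1) ^ 2) = (x - 1) ^ 2 * (x ^ 4 + 2 * x ^ 3 + 3 * x ^ 2 + 4 * x) := by
    ring
  have : 0 ≤ (x - 1) ^ 2 * (x ^ 4 + 2 * x ^ 3 + 3 * x ^ 2 + 4 * x) := by positivity
  linarith

lemma onept_norm {ρ : ℝ} (h0 : 0 ≤ ρ) (h1 : ρ ≤ 5/8) (a b : F3 → ℝ) (ha : ∀ v, 0 ≤ a v) (hb : ∀ v, 0 ≤ b v)
    (sa : ∑ v, a v = 3) (sb : ∑ v, b v = 3) :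
    1 ≤ (1 - ρ) / 9 * ((∑ v, a v ^ 6) * ∑ v, b v ^ 6) + ρ / 3 * ∑ v, a v ^ 6 * b v ^ 6 := by
  have hc : (Finset.univ : Finset F3).card = 3 := by decide
  have lo : ∀ c : F3 → ℝ, (∀ v, 0 ≤ c v) → ∑ v, c v = 3 →
      3 + 5 * ∑ v, (c v - 1) ^ 2 ≤ ∑ v, c v ^ 6 := by
    intro c hc0 hs
    have : ∑ v, (1 + 6 * (c v - 1) + 5 * (c v - 1) ^ 2) ≤ ∑ v, c v ^ 6 :=
      Finset.sum_le_sum fun v _ => pow6_ge (hc0 v)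
    rw [Finset.sum_add_distrib, Finset.sum_add_distrib, ← Finset.mul_sum, ← Finset.mul_sum,
      Finset.sum_sub_distrib, hs] at this
    simp only [Finset.sum_const, hc, nsmul_eq_mul] at this
    push_cast at this
    linarith
  have la := lo a ha sa
  have lb := lo b hb sb
  set X := ∑ v, (a v - 1) ^ 2 with hX
  set Y := ∑ v, (b v - 1) ^ 2 with hY
  have hX0 : 0 ≤ X := Finset.sum_nonneg fun v _ => sq_nonneg _
  have hY0 : 0 ≤ Y := Finset.sum_nonneg fun v _ => sq_nonneg _
  have lc : 3 - 3 * (X + Y) ≤ ∑ v, a v ^ 6 * b v ^ 6 := by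
    have : ∑ v, (1 + 6 * (a v - 1) + 6 * (b v - 1) - 3 * (a v - 1) ^ 2 - 3 * (b v - 1) ^ 2) ≤
        ∑ v, a v ^ 6 * b v ^ 6 := by
      apply Finset.sum_le_sum
      intro v _
      rw [← mul_pow]
      have := bern6 (a v * b v)
      nlinarith [sq_nonneg ((a v - 1) + (b v - 1))]
    rw [Finset.sum_sub_distrib, Finset.sum_sub_distrib, Finset.sum_add_distrib, Finset.sum_add_distrib,
      ← Finset.mul_sum, ← Finset.mul_sum, ← Finset.mul_sum, ← Finset.mul_sum,
      Finset.sum_sub_distrib, Finset.sum_sub_distrib, sa, sb] at this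
    simp only [Finset.sum_const, hc, nsmul_eq_mul] at this
    push_cast at this
    linarith
  have lab : (3 + 5 * X) * (3 + 5 * Y) ≤ (∑ v, a v ^ 6) * ∑ v, b v ^ 6 := by gcongr
  have lab2 : 9 + 15 * (X + Y) ≤ (∑ v, a v ^ 6) * ∑ v, b v ^ 6 := by nlinarith [mul_nonneg hX0 hY0]
  have e1 : (1 - ρ) / 9 * (9 + 15 * (X + Y)) ≤ (1 - ρ) / 9 * ((∑ v, a v ^ 6) * ∑ v, b v ^ 6) :=
    mul_le_mul_of_nonneg_left lab2 (by linarith)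
  have e2 : ρ / 3 * (3 - 3 * (X + Y)) ≤ ρ / 3 * ∑ v, a v ^ 6 * b v ^ 6 :=
    mul_le_mul_of_nonneg_left lc (by linarith)
  nlinarith [mul_nonneg (by linarith : 0 ≤ 5/8 - ρ) (by linarith : 0 ≤ X + Y)]

lemma onept {ρ : ℝ} (h0 : 0 ≤ ρ) (h1 : ρ ≤ 5/8) (a b : F3 → ℝ) (ha : ∀ v, 0 ≤ a v) (hb : ∀ v, 0 ≤ b v) :
    ((∑ v, a v) / 3) ^ 6 * ((∑ v, b v) / 3) ^ 6 ≤
      (∑ u, (∑ v, (1 + ρ * kap (u - v)) * (a u ^ 6 * b v ^ 6)) / 3) / 3 := by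
  have hk : ∀ u v : F3, (1 + ρ * kap (u - v)) * (a u ^ 6 * b v ^ 6) =
      (1 - ρ) * (a u ^ 6 * b v ^ 6) + if u = v then 3 * ρ * (a u ^ 6 * b v ^ 6) else 0 := by
    intro u v
    unfold kap
    simp only [sub_eq_zero]
    split_ifs <;> ring
  have he : (∑ u, (∑ v, (1 + ρ * kap (u - v)) * (a u ^ 6 * b v ^ 6)) / 3) / 3 =
      (1 - ρ) / 9 * ((∑ v, a v ^ 6) * ∑ v, b v ^ 6) + ρ / 3 * ∑ v, a v ^ 6 * b v ^ 6 := by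
    simp only [hk, Finset.sum_add_distrib, Finset.sum_ite_eq, Finset.mem_univ, if_true, add_div,
      ← Finset.sum_div, ← Finset.mul_sum]
    rw [← Finset.sum_mul]; ring
  rw [he]
  have hsa : 0 ≤ ∑ v, a v := Finset.sum_nonneg fun v _ => ha v
  have hsb : 0 ≤ ∑ v, b v := Finset.sum_nonneg fun v _ => hb v
  have hr0 : 0 ≤ (1 - ρ) / 9 * ((∑ v, a v ^ 6) * ∑ v, b v ^ 6) + ρ / 3 * ∑ v, a v ^ 6 * b v ^ 6 := by
    have : 0 ≤ 1 - ρ := by linarith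
    have : ∀ v, 0 ≤ a v ^ 6 := fun v => pow_nonneg (ha v) _
    have : ∀ v, 0 ≤ b v ^ 6 := fun v => pow_nonneg (hb v) _
    have : 0 ≤ ∑ v, a v ^ 6 := Finset.sum_nonneg fun v _ => by positivity
    have : 0 ≤ ∑ v, b v ^ 6 := Finset.sum_nonneg fun v _ => by positivity
    have : 0 ≤ ∑ v, a v ^ 6 * b v ^ 6 := Finset.sum_nonneg fun v _ => by positivity
    positivity
  rcases hsa.eq_or_lt with h | hpa
  · rw [← h]; simpa using hr0
  rcases hsb.eq_or_lt with h | hpb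
  · rw [← h]; simpa using hr0
  set α := (∑ v, a v) / 3 with hα
  set β := (∑ v, b v) / 3 with hβ
  have hα0 : 0 < α := by positivity
  have hβ0 : 0 < β := by positivity
  have key := onept_norm h0 h1 (fun v => a v / α) (fun v => b v / β)
    (fun v => div_nonneg (ha v) hα0.le) (fun v => div_nonneg (hb v) hβ0.le)
    (by rw [← Finset.sum_div, div_eq_iff hα0.ne', hα]; ring)
    (by rw [← Finset.sum_div, div_eq_iff hβ0.ne', hβ]; ring)
  simp only [div_pow, div_mul_div_comm, ← Finset.sum_div] at key
  have hab : 0 < α ^ 6 * β ^ 6 := by positivity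
  calc α ^ 6 * β ^ 6 = α ^ 6 * β ^ 6 * 1 := by ring
    _ ≤ _ := mul_le_mul_of_nonneg_left key hab.le
    _ = _ := by field_simp

lemma expV_cons {n : ℕ} (f : (Fin (n + 1) → F3) → ℝ) :
    expV f = (∑ u : F3, expV (fun x : Fin n → F3 => f (Fin.cons u x))) / 3 := by
  unfold expV
  rw [← Finset.sum_div, div_div, ← pow_succ]
  congr 1
  rw [← Fintype.sum_prod_type' (f := fun (u : F3) (x : Fin n → F3) => f (Fin.cons u x))]
  exact (Fintype.sum_equiv (Fin.consEquiv (fun _ : Fin (n+1) => F3)) _ _ (fun _ => rfl)).symm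

lemma rev_hyp {ρ : ℝ} (h0 : 0 ≤ ρ) (h1 : ρ ≤ 5/8) (n : ℕ) : ∀ (A B : (Fin n → F3) → ℝ),
    (∀ x, 0 ≤ A x) → (∀ x, 0 ≤ B x) →
    expV A ^ 6 * expV B ^ 6 ≤
      expV (fun x => expV (fun y => (∏ i, (1 + ρ * kap (x i - y i))) * (A x ^ 6 * B y ^ 6))) := by
  induction n with
  | zero =>
    intro A B _ _
    simp [expV]
  | succ n ih =>
    intro A B hA hB
    rw [expV_cons A, expV_cons B]
    refine (onept h0 h1 _ _ (fun u => expV_nonneg fun x => hA _) (fun u => expV_nonneg fun x => hB _)).trans ?_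
    rw [expV_cons]
    gcongr with u
    have : ∀ x : Fin n → F3, expV (fun y => (∏ i, (1 + ρ * kap ((Fin.cons u x : Fin (n+1) → F3) i - y i))) *
        (A (Fin.cons u x) ^ 6 * B y ^ 6)) = (∑ v, (1 + ρ * kap (u - v)) *
          expV (fun y => (∏ i, (1 + ρ * kap (x i - y i))) * (A (Fin.cons u x) ^ 6 * B (Fin.cons v y) ^ 6))) / 3 := by
      intro x
      rw [expV_cons]
      congr 1
      apply Finset.sum_congr rfl
      intro v _
      rw [← expV_mul]
      congr 1; ext y
      rw [Fin.prod_univ_succ]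
      simp only [Fin.cons_zero, Fin.cons_succ]
      ring
    simp only [this]
    have e2 : ∀ F : F3 → (Fin n → F3) → ℝ, expV (fun x => (∑ v, F v x) / 3) = (∑ v, expV (F v)) / 3 := by
      intro F
      rw [← expV_sum, div_eq_inv_mul, ← expV_mul]
      congr 1; ext x; ring
    rw [e2]
    simp only [expV_mul]
    gcongr with v
    · unfold kap; split_ifs <;> linarith
    · exact ih _ _ (fun x => hA _) (fun x => hB _)

lemma rev_hyp' {ρ : ℝ} (h0 : 0 ≤ ρ) (h1 : ρ ≤ 5/8) {A B : (Fin R → F3) → ℝ}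
    (hA : ∀ f, 0 ≤ A f ∧ A f ≤ 1) (hB : ∀ f, 0 ≤ B f ∧ B f ≤ 1) :
    expV A ^ 6 * expV B ^ 6 ≤ expV (fun x => A x * MM (fun S => ρ ^ S.card) B x) := by
  refine (rev_hyp h0 h1 R A B (fun x => (hA x).1) (fun x => (hB x).1)).trans ?_
  have he : (fun S : Finset (Fin R) => ρ ^ S.card) = fun S => ∏ i ∈ S, ρ := by
    ext S; simp
  rw [he]
  simp only [MM_prod, ← expV_mul]
  apply expV_mono; intro x
  apply expV_mono; intro y
  have hk : 0 ≤ ∏ i, (1 + ρ * kap (x i - y i)) := by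
    apply Finset.prod_nonneg
    intro i _
    unfold kap; split_ifs <;> linarith
  have p6 : ∀ t : ℝ, 0 ≤ t → t ≤ 1 → t ^ 6 ≤ t := fun t h h' => pow_le_of_le_one h h' (by norm_num)
  have h2 : A x ^ 6 * B y ^ 6 ≤ A x * B y :=
    mul_le_mul (p6 _ (hA x).1 (hA x).2) (p6 _ (hB y).1 (hB y).2) (pow_nonneg (hB y).1 _) (hA x).1
  calc _ ≤ (∏ i, (1 + ρ * kap (x i - y i))) * (A x * B y) := mul_le_mul_of_nonneg_left h2 hk
    _ = _ := by ring

lemma mF_compl (F S : Finset (Fin R)) :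
    mF (9/10) F S * ((50/81) ^ S.card * mF (9/10) Fᶜ S) = (-1/2 : ℝ) ^ S.card := by
  unfold mF
  have h : (S ∩ F).card + (S ∩ Fᶜ).card = S.card := by
    rw [← Finset.sdiff_eq_inter_compl, add_comm]
    exact Finset.card_sdiff_add_card_inter S F
  calc _ = (-1 : ℝ) ^ ((S ∩ F).card + (S ∩ Fᶜ).card) * ((9/10) * (9/10) * (50/81)) ^ S.card := by
        rw [pow_add, mul_pow, mul_pow]; ring
    _ = _ := by rw [h, ← mul_pow]; norm_num

lemma core (k : ℕ) {A B : (Fin R → F3) → ℝ}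
    (hA : ∀ f, 0 ≤ A f ∧ A f ≤ 1) (hB : ∀ f, 0 ≤ B f ∧ B f ≤ 1) {d : ℝ} (hd : 0 < d)
    (hI : ∀ i, infV k A i ≤ d ^ 2 ∨ infV k B i ≤ d ^ 2) {η : ℝ} (hη : 0 < η) (hη1 : η ≤ 1)
    (hsm : ((9/10 : ℝ) ^ 2) ^ k + 3 * (4 ^ k * d) * k ≤ η ^ 3) {μ : ℝ} (hμ : 4 * η ≤ μ)
    (hEA : μ ≤ expV A) (hEB : μ ≤ expV B) :
    (μ - 4 * η) ^ 12 ≤ expV (fun x => A x * MM (fun S => (-1/2 : ℝ) ^ S.card) B x) + 8 * η := by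
  classical
  set F : Finset (Fin R) := Finset.univ.filter fun i => infV k A i ≤ d ^ 2 with hF
  have hs0 : (0:ℝ) ≤ 9/10 := by norm_num
  have hs1 : (9/10:ℝ) ≤ 1 := by norm_num
  have nA := near hs0 hs1 k hA hd F (by intro i hi; simpa [hF] using hi) hη hη1 hsm
  have nB := near hs0 hs1 k hB hd Fᶜ (by
    intro i hi
    simp only [hF, Finset.mem_compl, Finset.mem_filter, Finset.mem_univ, true_and] at hi
    exact (hI i).resolve_left hi) hη hη1 hsm
  set At := MM (mF (9/10) F) A with hAt
  set Bt := MM (mF (9/10) Fᶜ) B with hBt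
  set Ac : (Fin R → F3) → ℝ := fun x => clip (MM (mL (9/10) k F) A x) with hAc
  set Bc : (Fin R → F3) → ℝ := fun x => clip (MM (mL (9/10) k Fᶜ) B x) with hBc
  have rA : ∀ x, 0 ≤ Ac x ∧ Ac x ≤ 1 := fun x => ⟨clip_nonneg _, clip_le _⟩
  have rB : ∀ x, 0 ≤ Bc x ∧ Bc x ≤ 1 := fun x => ⟨clip_nonneg _, clip_le _⟩
  set T := MM (R := R) (fun S => (50/81 : ℝ) ^ S.card) with hT
  have hmF : ∀ G S : Finset (Fin R), |mF (9/10) G S| ≤ 1 := by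
    intro G S
    rw [← sq_le_one_iff_abs_le_one, mF_sq]
    exact pow_le_one₀ (by norm_num) (by norm_num)
  have hTm : ∀ S : Finset (Fin R), |(50/81 : ℝ) ^ S.card| ≤ 1 := by
    intro S
    rw [abs_of_nonneg (by positivity)]
    exact pow_le_one₀ (by norm_num) (by norm_num)
  -- the correlation is unchanged
  have hcorr : expV (fun x => A x * MM (fun S => (-1/2 : ℝ) ^ S.card) B x) =
      expV (fun x => At x * T Bt x) := by
    rw [hAt, MM_symm]
    congr 1; ext x
    congr 1
    rw [hT, hBt]
    have : MM (fun S => (50/81 : ℝ) ^ S.card) (MM (mF (9/10) Fᶜ) B) =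
        MM (fun S => (50/81 : ℝ) ^ S.card * mF (9/10) Fᶜ S) B := by
      ext y; rw [MM_MM]
    rw [this, MM_MM]
    simp only [mF_compl]
  have hrev := rev_hyp' (ρ := 50/81) (by norm_num) (by norm_num) rA rB
  -- error terms
  have h1 : |expV (fun x => (At x - Ac x) * T Bt x)| ≤ 4 * η * 1 := by
    apply expV_CS (by positivity) zero_le_one nA
    rw [one_pow]
    exact (MM_contract _ hTm _).trans ((MM_contract _ (hmF _) _).trans (sq_mean_le hB))
  have h2 : |expV (fun x => Ac x * T (fun y => Bt y - Bc y) x)| ≤ 1 * (4 * η) := by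
    apply expV_CS zero_le_one (by positivity)
    · rw [one_pow]; exact sq_mean_le rA
    · exact (MM_contract _ hTm _).trans nB
  have h3 : expV (fun x => Ac x * T Bc x) = expV (fun x => At x * T Bt x) -
      expV (fun x => (At x - Ac x) * T Bt x) - expV (fun x => Ac x * T (fun y => Bt y - Bc y) x) := by
    rw [← expV_sub, ← expV_sub]
    congr 1; ext x
    rw [hT, MM_sub]; ring
  have hm : ∀ {f g : (Fin R → F3) → ℝ}, expV (fun x => (f x - g x) ^ 2) ≤ (4 * η) ^ 2 →
      expV f - 4 * η ≤ expV g := by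
    intro f g hfg
    have := expV_CS (f := fun x => f x - g x) (g := fun _ => 1) (a := 4 * η) (b := 1) (by positivity) zero_le_one hfg
      (by simp [expV_const])
    simp only [mul_one] at this
    rw [expV_sub] at this
    linarith [(abs_le.1 this).2]
  have eA : expV At = expV A := by rw [hAt, expV_MM]; simp [mF]
  have eB : expV Bt = expV B := by rw [hBt, expV_MM]; simp [mF]
  have mA : μ - 4 * η ≤ expV Ac := by have := hm nA; rw [eA] at this; linarith
  have mB : μ - 4 * η ≤ expV Bc := by have := hm nB; rw [eB] at this; linarith
  have hp : 0 ≤ μ - 4 * η := by linarith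
  have h4 : (μ - 4 * η) ^ 12 ≤ expV Ac ^ 6 * expV Bc ^ 6 := by
    calc (μ - 4 * η) ^ 12 = (μ - 4 * η) ^ 6 * (μ - 4 * η) ^ 6 := by ring
      _ ≤ _ := by gcongr
  rw [hcorr]
  have := (abs_le.1 h1).1
  have := (abs_le.1 h2).1
  have h5 : expV Ac ^ 6 * expV Bc ^ 6 ≤ expV (fun x => Ac x * T Bc x) := hrev
  linarith

lemma trivial_lower {A B : (Fin R → F3) → ℝ}
    (hA : ∀ f, 0 ≤ A f ∧ A f ≤ 1) (hB : ∀ f, 0 ≤ B f ∧ B f ≤ 1) :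
    expV A + expV B - 1 ≤ expV (fun x => A x * MM (fun S => (-1/2 : ℝ) ^ S.card) B x) := by
  have e : expV (MM (fun S => (-1/2 : ℝ) ^ S.card) B) = expV B := by rw [expV_MM]; simp
  have h1 : expV (fun x => (A x + MM (fun S => (-1/2 : ℝ) ^ S.card) B x) - (1 : ℝ)) ≤
      expV (fun x => A x * MM (fun S => (-1/2 : ℝ) ^ S.card) B x) := by
    apply expV_mono
    intro x
    have := Ts_range (s := -1/2) (by norm_num) (by norm_num) hB x
    nlinarith [hA x]
  have h2 := expV_sub (fun x => A x + MM (fun S => (-1/2 : ℝ) ^ S.card) B x)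
    (fun _ : Fin R → F3 => (1 : ℝ))
  have h3 := expV_add A (MM (fun S => (-1/2 : ℝ) ^ S.card) B)
  have h4 := expV_const (R := R) 1
  linarith


lemma base_le : ((9/10:ℝ)^2) ≤ Real.exp (-1/5) := by
  have h : ((9/10:ℝ)^2)^5 ≤ (Real.exp (-1/5))^5 := by
    rw [← Real.exp_nat_mul]
    have e : (((5:ℕ):ℝ) * (-1/5)) = -1 := by norm_num
    rw [e, Real.exp_neg]
    have h1 := Real.exp_one_lt_d9
    rw [le_inv_comm₀ (by positivity) (Real.exp_pos _)]
    refine le_trans h1.le ?_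
    norm_num
  exact le_of_pow_le_pow_left₀ (by norm_num) (Real.exp_pos _).le h

lemma exp_three_bounds : 8 ≤ Real.exp 3 ∧ Real.exp 3 ≤ 27 := by
  have e : Real.exp 3 = (Real.exp 1)^3 := by rw [← Real.exp_nat_mul]; norm_num
  rw [e]
  constructor
  · calc (8:ℝ) = 2^3 := by norm_num
      _ ≤ _ := by gcongr; linarith [Real.exp_one_gt_d9]
  · calc (Real.exp 1)^3 ≤ 3^3 := by gcongr; linarith [Real.exp_one_lt_d9]
      _ = 27 := by norm_num

lemma numeric_small {μ : ℝ} (h0 : 0 < μ) (h1 : μ < 3/4) (k : ℕ)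
    (hk : k = ⌈915 * Real.log (1/μ)⌉₊) :
    ((9/10:ℝ)^2)^k + 3*(4^k*μ^3000)*k ≤ (μ^60)^3 := by
  set L := Real.log (1/μ) with hL
  have hμe : ∀ n : ℕ, μ ^ n = Real.exp (-(n*L)) := by
    intro n
    have : μ = Real.exp (-L) := by
      rw [hL, one_div, Real.log_inv, neg_neg, Real.exp_log h0]
    rw [this, ← Real.exp_nat_mul]
    congr 1; ring
  have hL0 : 0 ≤ L := Real.log_nonneg (by rw [le_div_iff₀ h0]; linarith)
  have k1 : 915 * L ≤ k := by rw [hk]; exact Nat.le_ceil _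
  have k2 : (k:ℝ) ≤ 915 * L + 1 := by
    rw [hk]; exact (Nat.ceil_lt_add_one (by positivity)).le
  have m3 : μ^3 ≤ 1/2 := by
    calc μ^3 ≤ (3/4)^3 := by gcongr
      _ ≤ 1/2 := by norm_num
  have p180 : 0 < μ^180 := by positivity
  have a1 : ((9/10:ℝ)^2)^k ≤ μ^180 * (1/2) := by
    calc ((9/10:ℝ)^2)^k ≤ (Real.exp (-1/5))^k := by gcongr; exact base_le
      _ = Real.exp (k * (-1/5)) := by rw [← Real.exp_nat_mul]
      _ ≤ Real.exp (-((183:ℕ)*L)) := by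
          apply Real.exp_le_exp.2; push_cast; linarith
      _ = μ^183 := (hμe 183).symm
      _ = μ^180 * μ^3 := by rw [← pow_add]
      _ ≤ _ := by gcongr
  have a2 : 3*(4^k*μ^3000)*k ≤ μ^180 * (1/2) := by
    have hk2 : (k:ℝ) ≤ 2^k := by exact_mod_cast Nat.lt_two_pow_self.le
    have p3 : 0 < μ^3000 := by positivity
    have e8 : (4:ℝ)^k * 2^k = 8^k := by rw [← mul_pow]; norm_num
    have b1 : (8:ℝ)^k ≤ Real.exp (k*3) := by
      rw [Real.exp_nat_mul]; gcongr; exact exp_three_bounds.1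
    have b2 : Real.exp (k*3) * μ^3000 ≤ 27 * μ^255 := by
      rw [hμe 3000, hμe 255, ← Real.exp_add]
      calc _ ≤ Real.exp (3 + (-((255:ℕ)*L))) := by
            apply Real.exp_le_exp.2; push_cast; linarith
        _ = Real.exp 3 * Real.exp (-((255:ℕ)*L)) := Real.exp_add _ _
        _ ≤ _ := by gcongr; exact exp_three_bounds.2
    have b3 : μ^255 ≤ μ^180 * (1/2)^8 := by
      calc μ^255 ≤ μ^204 := pow_le_pow_of_le_one h0.le (by linarith) (by norm_num)
        _ = μ^180 * (μ^3)^8 := by rw [← pow_mul, ← pow_add]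
        _ ≤ _ := by gcongr
    calc 3*(4^k*μ^3000)*k ≤ 3*(4^k*μ^3000)*2^k := by gcongr
      _ = 3 * ((4^k * 2^k) * μ^3000) := by ring
      _ = 3 * (8^k * μ^3000) := by rw [e8]
      _ ≤ 3 * (Real.exp (k*3) * μ^3000) := by gcongr
      _ ≤ 3 * (27 * μ^255) := by gcongr
      _ ≤ 3 * (27 * (μ^180 * (1/2)^8)) := by gcongr
      _ ≤ _ := by nlinarith
  have e : (μ^60)^3 = μ^180 := by rw [← pow_mul]
  rw [e]
  linarith

lemma final_step {μ : ℝ} (h0 : 0 < μ) (h1 : μ < 1) {A B : (Fin R → F3) → ℝ}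
    (hA : ∀ f, 0 ≤ A f ∧ A f ≤ 1) (hB : ∀ f, 0 ≤ B f ∧ B f ≤ 1)
    (hEA : μ < expV A) (hEB : μ < expV B)
    (hH : expV (fun x => A x * MM (fun S => (-1/2 : ℝ) ^ S.card) B x) ≤ μ^6000) :
    ∃ x : Fin R, μ^6000 ≤ infV ⌈6000 * Real.log (1 / μ)⌉₊ A x ∧
      μ^6000 ≤ infV ⌈6000 * Real.log (1 / μ)⌉₊ B x := by
  by_contra hno
  push Not at hno
  rcases le_or_gt (3/4) μ with h | h
  · have t := trivial_lower hA hB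
    have q : μ^6000 ≤ μ^4 := pow_le_pow_of_le_one h0.le h1.le (by norm_num)
    have : μ^4 < 2*μ - 1 := by
      have e : 2*μ - 1 - μ^4 = (1-μ)*(μ^3+μ^2+μ-1) := by ring
      have : 0 < μ^3+μ^2+μ-1 := by nlinarith [pow_pos h0 3]
      have := mul_pos (sub_pos.2 h1) this
      linarith
    linarith
  · have hL0 : 0 ≤ Real.log (1/μ) := Real.log_nonneg (by rw [le_div_iff₀ h0]; linarith)
    have hkK : ⌈915 * Real.log (1/μ)⌉₊ ≤ ⌈6000 * Real.log (1/μ)⌉₊ :=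
      Nat.ceil_mono (by nlinarith)
    have hd2 : (μ^3000)^2 = μ^6000 := by rw [← pow_mul]
    have m3 : μ^3 ≤ 1/2 := by
      calc μ^3 ≤ (3/4)^3 := by gcongr
        _ ≤ 1/2 := by norm_num
    have h59 : 8 * μ^60 ≤ μ := by
      calc 8 * μ^60 ≤ 8 * μ^10 := by
            gcongr 8 * ?_
            exact pow_le_pow_of_le_one h0.le h1.le (by norm_num)
        _ = 8 * ((μ^3)^3 * μ) := by ring
        _ ≤ 8 * ((1/2)^3 * μ) := by gcongr
        _ = μ := by ring
    have hc := core (A := A) (B := B) (d := μ^3000) (η := μ^60) (μ := μ)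
      ⌈915 * Real.log (1/μ)⌉₊ hA hB (by positivity)
      (fun i => by
        rw [hd2]
        by_cases hi : μ^6000 ≤ infV ⌈6000 * Real.log (1 / μ)⌉₊ A i
        · exact Or.inr ((infV_mono hkK B i).trans (hno i hi).le)
        · exact Or.inl ((infV_mono hkK A i).trans (not_le.1 hi).le))
      (by positivity) (pow_le_one₀ h0.le h1.le)
      (numeric_small h0 h _ rfl) (by linarith [pow_pos h0 60]) hEA.le hEB.le
    have c1 : μ^48 ≤ (μ - 4*μ^60)^12 := by
      calc μ^48 = (μ^3*μ)^12 := by rw [← pow_succ, ← pow_mul]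
        _ ≤ (μ - 4*μ^60)^12 := by
          gcongr
          nlinarith
    have c2 : μ^6000 ≤ μ^60 := pow_le_pow_of_le_one h0.le h1.le (by norm_num)
    have c3 : μ^60 ≤ μ^48 * (1/2)^4 := by
      calc μ^60 = μ^48 * (μ^3)^4 := by rw [← pow_mul, ← pow_add]
        _ ≤ _ := by gcongr
    have c4 : 0 < μ^48 := by positivity
    norm_num at c3
    linarith


end MajStab

/-- Derandomized-free "majority is stablest" (Dinur–Shinkar): there is a universal `C > 0`
such that for `μ ∈ (0,1)`, `δ := μ^C`, `k := ⌈C·log(1/μ)⌉`, and any `R ≥ 1`: if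
`A, B : F₃^R → [0,1]` satisfy `E[A] > μ`, `E[B] > μ` and
`E[A(f)B(f+g)] ≤ δ` (with `f` uniform and `g` uniform among vectors with all
coordinates nonzero), then some coordinate `x` has `Inf_x^{≤k}(A) ≥ δ` and
`Inf_x^{≤k}(B) ≥ δ`. -/
theorem stmt4 :
    ∃ C : ℝ, 0 < C ∧
      ∀ μ : ℝ, 0 < μ → μ < 1 →
        ∀ R : ℕ, 1 ≤ R →
          ∀ A B : (Fin R → F3) → ℝ,
            (∀ f, 0 ≤ A f ∧ A f ≤ 1) → (∀ f, 0 ≤ B f ∧ B f ≤ 1) →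
            μ < expV A → μ < expV B →
            (∑ f : Fin R → F3,
                ∑ g ∈ Finset.univ.filter (fun g : Fin R → F3 => ∀ i, g i ≠ 0),
                  A f * B (f + g)) / (3 ^ R * 2 ^ R) ≤ μ ^ C →
            ∃ x : Fin R,
              μ ^ C ≤ infV ⌈C * Real.log (1 / μ)⌉₊ A x ∧
              μ ^ C ≤ infV ⌈C * Real.log (1 / μ)⌉₊ B x := by
  refine ⟨((6000:ℕ):ℝ), by norm_num, ?_⟩
  intro μ h0 h1 R _ A B hA hB hEA hEB hH
  rw [hyp_eq, Real.rpow_natCast] at hH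
  rw [Real.rpow_natCast]
  have := final_step h0 h1 hA hB hEA hEB hH
  exact_mod_cast this
end

section
/- Let f ∈ F₃[x₁,…,x_r] be a non-zero polynomial of total degree at most d in which every variable has individual degree at most 2. Then Pr_{a ∈ F₃^r}[f(a) ≠ 0] ≥ 3^{−d/2}, where a is uniform on F₃^r. -/
open scoped BigOperators

theorem poly_count (p : Polynomial F3) (hp : p ≠ 0) :
    3 ≤ (Finset.univ.filter (fun a : F3 => p.eval a ≠ 0)).card + p.natDegree := by
  classical
  have h1 : (Finset.univ.filter (fun a : F3 => p.eval a = 0)).card ≤ p.natDegree := by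
    refine le_trans (Finset.card_le_card ?_) (le_trans (Multiset.toFinset_card_le p.roots) p.card_roots')
    intro a ha
    simp only [Finset.mem_filter, Finset.mem_univ, true_and] at ha
    simp [hp, ha]
  have h2 := Finset.card_filter_add_card_filter_not (s := (Finset.univ : Finset F3))
    (fun a : F3 => p.eval a = 0)
  have h3 : (Finset.univ : Finset F3).card = 3 := by simp
  simp only [ne_eq]
  omega

theorem fiber_count {α β : Type} [Fintype α] [Fintype β] (T : Finset β)
    (Q : α → β → Prop) [∀ s, DecidablePred (fun a => Q a s)]
    [DecidablePred (fun q : α × β => Q q.1 q.2)] (m : ℕ)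
    (h : ∀ s ∈ T, m ≤ (Finset.univ.filter (fun a => Q a s)).card) :
    T.card * m ≤ (Finset.univ.filter (fun q : α × β => Q q.1 q.2)).card := by
  classical
  have h1 : T.card * m ≤ (T.sigma (fun s => Finset.univ.filter (fun a => Q a s))).card := by
    rw [Finset.card_sigma, ← smul_eq_mul]
    exact Finset.card_nsmul_le_sum _ _ _ h
  refine le_trans h1 ?_
  refine Finset.card_le_card_of_injOn (fun x => (x.2, x.1)) ?_ ?_
  · rintro ⟨s, a⟩ ha
    have ha' : s ∈ T ∧ Q a s := by simpa using ha
    simpa using ha'.2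
  · rintro ⟨s, a⟩ _ ⟨s', a'⟩ _ hab
    simp only [Prod.mk.injEq] at hab
    obtain ⟨rfl, rfl⟩ := hab
    rfl

theorem count_aux (r : ℕ) : ∀ (d : ℕ) (f : MvPolynomial (Fin r) F3), f ≠ 0 →
    f.totalDegree ≤ d → (∀ i, f.degreeOf i ≤ 2) →
    9 ^ r ≤ (Finset.univ.filter (fun a : Fin r → F3 => MvPolynomial.eval a f ≠ 0)).card ^ 2
      * 3 ^ d := by
  classical
  induction r with
  | zero =>
    intro d f hf _ _
    obtain ⟨c, rfl⟩ := MvPolynomial.C_surjective (Fin 0) f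
    have hc : c ≠ 0 := by
      rintro rfl
      simp at hf
    simp [hc, Nat.one_le_iff_ne_zero]
  | succ n ih =>
    intro d f hf hd hi
    set P := MvPolynomial.finSuccEquiv F3 n f with hP
    have hP0 : P ≠ 0 := by simpa [hP] using hf
    set k := P.natDegree with hk
    have hk2 : k ≤ 2 := by
      rw [hk, hP, MvPolynomial.natDegree_finSuccEquiv]
      exact hi 0
    set g := P.coeff k with hg
    have hg0 : g ≠ 0 := by
      rw [hg, hk]
      simpa using hP0
    have htd : g.totalDegree + k ≤ d :=
      le_trans (MvPolynomial.totalDegree_coeff_finSuccEquiv_add_le f k hg0) hd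
    have IH := ih (d - k) g hg0 (by omega)
      (fun i => le_trans (MvPolynomial.degreeOf_coeff_finSuccEquiv f i k) (hi _))
    set N := (Finset.univ.filter (fun a : Fin (n+1) → F3 => MvPolynomial.eval a f ≠ 0)).card
      with hN
    set M := (Finset.univ.filter (fun a : Fin n → F3 => MvPolynomial.eval a g ≠ 0)).card
      with hM
    have key : M * (3 - k) ≤ N := by
      have hN' : N = (Finset.univ.filter (fun q : F3 × (Fin n → F3) =>
          (P.map (MvPolynomial.eval q.2)).eval q.1 ≠ 0)).card := by
        rw [hN]
        symm
        refine Finset.card_equiv (Fin.consEquiv (fun _ : Fin (n+1) => F3)) ?_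
        rintro ⟨a, s⟩
        simp [Fin.consEquiv, MvPolynomial.eval_eq_eval_mv_eval', hP]
      rw [hN', hM]
      refine fiber_count _ (fun (a : F3) s => (P.map (MvPolynomial.eval s)).eval a ≠ 0) _ ?_
      intro s hs
      simp only [Finset.mem_filter, Finset.mem_univ, true_and] at hs
      have hp0 : P.map (MvPolynomial.eval s) ≠ 0 := by
        intro h0
        apply hs
        rw [hg, ← Polynomial.coeff_map, h0, Polynomial.coeff_zero]
      have h1 := poly_count _ hp0
      have h2 : (P.map (MvPolynomial.eval s)).natDegree ≤ k := Polynomial.natDegree_map_le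
      omega
    have hd' : 3 ^ d = 3 ^ (d - k) * 3 ^ k := by
      rw [← pow_add]
      congr 1
      omega
    have h9 : 9 ≤ (3 - k) ^ 2 * 3 ^ k := by
      interval_cases k <;> norm_num
    calc 9 ^ (n + 1) = 9 ^ n * 9 := pow_succ _ _
      _ ≤ (M ^ 2 * 3 ^ (d - k)) * ((3 - k) ^ 2 * 3 ^ k) := Nat.mul_le_mul IH h9
      _ = (M * (3 - k)) ^ 2 * 3 ^ d := by rw [hd']; ring
      _ ≤ N ^ 2 * 3 ^ d := by gcongr

/-- Schwartz–Zippel over `F₃` for polynomials with individual degrees at most 2: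
a nonzero such polynomial of total degree at most `d` is nonzero on at least a
`3^{−d/2}` fraction of points. -/
theorem stmt7 (r d : ℕ) (f : MvPolynomial (Fin r) F3) (hf : f ≠ 0)
    (hdeg : f.totalDegree ≤ d) (hind : ∀ i, f.degreeOf i ≤ 2) :
    (3 : ℝ) ^ (-(d : ℝ) / 2) ≤
      ((Finset.univ.filter (fun a : Fin r → F3 => MvPolynomial.eval a f ≠ 0)).card : ℝ)
        / 3 ^ r := by
  have h := count_aux r d f hf hdeg hind
  set N := (Finset.univ.filter (fun a : Fin r → F3 => MvPolynomial.eval a f ≠ 0)).card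
  have h' : (9 : ℝ) ^ r ≤ (N : ℝ) ^ 2 * 3 ^ d := by exact_mod_cast h
  refine (pow_le_pow_iff_left₀ (by positivity) (by positivity) (two_ne_zero)).1 ?_
  have e : ((3 : ℝ) ^ (-(d : ℝ) / 2)) ^ 2 = (3 ^ d)⁻¹ := by
    rw [← Real.rpow_natCast, ← Real.rpow_mul (by norm_num)]
    rw [← Real.rpow_natCast, ← Real.rpow_neg (by norm_num)]
    congr 1
    push_cast
    ring
  rw [e, div_pow, ← pow_mul, mul_comm r 2, pow_mul, inv_eq_one_div,
    div_le_div_iff₀ (by positivity) (by positivity)]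
  norm_num
  exact h'
end

section
/- For all r, d ∈ ℕ and every t ∈ ℕ with t < 3^{(d+1)/2}: for any t distinct points x₁,…,x_t ∈ F₃^r and any values b₁,…,b_t ∈ F₃, Pr_{p}[p(x_i) = b_i for all i ∈ {1,…,t}] = 3^{−t}, where p is uniform on P_{r,d}. (That is, a uniformly random element of P_{r,d}, viewed as a string of length 3^r over F₃, is t-wise independent.) -/
open scoped BigOperators

abbrev Pt (r : ℕ) := Fin r → F3
abbrev Fn (r : ℕ) := Pt r → F3

/-- The set of functions `F₃^r → F₃` computed by polynomials of total degree at most `d`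
with individual degrees at most `2`. -/
def PolySet (r d : ℕ) : Set (Fn r) :=
  {g | ∃ P : MvPolynomial (Fin r) F3,
        P.totalDegree ≤ d ∧ (∀ i, P.degreeOf i ≤ 2) ∧
        ∀ x, g x = MvPolynomial.eval x P}

noncomputable def polyFinset (r d : ℕ) : Finset (Fn r) :=
  (Set.toFinite (PolySet r d)).toFinset

/-- Support size `|β|`. -/
def supp {r : ℕ} (β : Fn r) : ℕ := (Finset.univ.filter fun x => β x ≠ 0).card

/-- Dot product `⟨β, f⟩ = Σ_x β(x) f(x)` in `F₃`. -/
def dotF {r : ℕ} (β f : Fn r) : F3 := ∑ x, β x * f x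

/-- The character `χ_β(f) = ω^{⟨β,f⟩}`. -/
noncomputable def chi {r : ℕ} (β f : Fn r) : ℂ := ω ^ (dotF β f).val

/-- The dual `S^⊥` of a set of functions. -/
def dualSet (r : ℕ) (S : Set (Fn r)) : Set (Fn r) := {g | ∀ h ∈ S, dotF g h = 0}

/-- `Λ` contains exactly one representative, of minimal support size, from each coset
of `𝔉_r` modulo `P_{r,d}^⊥`. -/
def IsMinRepSet (r d : ℕ) (Λ : Finset (Fn r)) : Prop :=
  (∀ β : Fn r, ∃! β', β' ∈ Λ ∧ β - β' ∈ dualSet r (PolySet r d)) ∧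
  (∀ β' ∈ Λ, ∀ γ : Fn r, β' - γ ∈ dualSet r (PolySet r d) → supp β' ≤ supp γ)

/-- The noise `a·(p² + 1)` (pointwise). -/
def shift {r : ℕ} (p : Fn r) (a : F3) : Fn r := fun x => a * (p x ^ 2 + 1)

/-- Fourier coefficient `Â(β)` of a function on `P_{r,d}`. -/
noncomputable def fourierP (r d : ℕ) (A : Fn r → ℂ) (β : Fn r) : ℂ :=
  (∑ g ∈ polyFinset r d, A g * (starRingEnd ℂ) (chi β g)) / ((polyFinset r d).card : ℂ)

/-- Expectation `E_{f ∈ P_{r,d}}[A(f)]`. -/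
noncomputable def expP (r d : ℕ) (A : Fn r → ℝ) : ℝ :=
  (∑ f ∈ polyFinset r d, A f) / ((polyFinset r d).card : ℝ)

/-- Degree-`k` influence `Inf_x^{≤k}(A)` with respect to a set `Λ` of minimal-support
coset representatives. -/
noncomputable def infP (r d k : ℕ) (Λ : Finset (Fn r)) (A : Fn r → ℝ) (x : Pt r) : ℝ :=
  ∑ β ∈ Λ.filter (fun β => β x ≠ 0 ∧ supp β ≤ k),
    ‖fourierP r d (fun g => (A g : ℂ)) β‖ ^ 2

/-- Polynomials of total degree `< e` (zero if `e = 0`) with individual degrees at most `2`. -/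
def GoodPoly {r : ℕ} (e : ℕ) (P : MvPolynomial (Fin r) F3) : Prop :=
  (P = 0 ∨ P.totalDegree + 1 ≤ e) ∧ ∀ i, P.degreeOf i ≤ 2

lemma exists_order (n : F3 → ℕ) : ∃ a b c : F3, a ≠ b ∧ a ≠ c ∧ b ≠ c ∧
    (∀ z, z = a ∨ z = b ∨ z = c) ∧ n b ≤ n a ∧ n c ≤ n b := by
  have key : ∀ a b c : F3, a ≠ b → a ≠ c → b ≠ c → ∀ z, z = a ∨ z = b ∨ z = c := by decide
  have h01 : (0 : F3) ≠ 1 := by decide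
  have h02 : (0 : F3) ≠ 2 := by decide
  have h12 : (1 : F3) ≠ 2 := by decide
  have mk : ∀ a b c : F3, a ≠ b → a ≠ c → b ≠ c → n b ≤ n a → n c ≤ n b →
    ∃ a b c : F3, a ≠ b ∧ a ≠ c ∧ b ≠ c ∧
    (∀ z, z = a ∨ z = b ∨ z = c) ∧ n b ≤ n a ∧ n c ≤ n b :=
    fun a b c h1 h2 h3 h4 h5 => ⟨a, b, c, h1, h2, h3, key a b c h1 h2 h3, h4, h5⟩
  rcases le_total (n 0) (n 1) with h | h <;> rcases le_total (n 0) (n 2) with h' | h' <;>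
    rcases le_total (n 1) (n 2) with h'' | h''
  · exact mk 2 1 0 h12.symm h02.symm h01.symm h'' h
  · exact mk 1 2 0 h12 h01.symm h02.symm h'' h'
  · exact mk 2 1 0 h12.symm h02.symm h01.symm h'' h
  · exact mk 1 0 2 h01.symm h12 h02 h h'
  · exact mk 2 0 1 h02.symm h12.symm h01 h' h
  · exact mk 2 0 1 h02.symm h12.symm h01 h' h
  · exact mk 0 2 1 h02 h01 h12.symm h' h''
  · exact mk 0 1 2 h01 h02 h12 h h''

lemma good_zero {r : ℕ} (e : ℕ) : GoodPoly e (0 : MvPolynomial (Fin r) F3) :=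
  ⟨Or.inl rfl, fun i => by simp⟩

open MvPolynomial in
lemma degreeOf_zero_rename {r : ℕ} (P : MvPolynomial (Fin r) F3) :
    (rename Fin.succ P).degreeOf 0 = 0 := by
  classical
  by_contra h
  have h1 : (0 : Fin (r+1)) ∈ (rename Fin.succ P).vars := by
    by_contra h2
    exact h (Nat.le_zero.1 (degreeOf_le_iff.2 (by
      intro m hm
      by_contra h3
      exact h2 ((mem_vars _).2 ⟨m, hm, by
        rw [Finsupp.mem_support_iff]; omega⟩))))
  have := vars_rename Fin.succ P h1
  simp at this

open MvPolynomial in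
/-- Multiplying a lifted polynomial by a polynomial of degree `≤ k` in the new variable. -/
lemma good_mul {r e k : ℕ} (B : MvPolynomial (Fin r) F3) (hB : GoodPoly (e - k) B)
    (L : MvPolynomial (Fin (r + 1)) F3) (hL : L.totalDegree ≤ k) (hk : k ≤ 2)
    (hL0 : ∀ j : Fin r, L.degreeOf j.succ = 0) :
    GoodPoly e (L * rename Fin.succ B) := by
  obtain ⟨h1, h2⟩ := hB
  constructor
  · rcases h1 with h1 | h1
    · left; simp [h1]
    · right
      have a1 := totalDegree_mul L (rename Fin.succ B)
      have a2 := totalDegree_rename_le Fin.succ B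
      omega
  · intro i
    have a1 := degreeOf_mul_le i L (rename Fin.succ B)
    refine Fin.cases (motive := fun i => degreeOf i (L * rename Fin.succ B) ≤ 2) ?_ ?_ i
    · have a1 := degreeOf_mul_le 0 L (rename Fin.succ B)
      rw [degreeOf_zero_rename] at a1
      have := degreeOf_le_totalDegree L 0
      omega
    · intro j
      have a1 := degreeOf_mul_le j.succ L (rename Fin.succ B)
      rw [hL0, degreeOf_rename_of_injective (Fin.succ_injective r)] at a1
      have := h2 j
      omega

open MvPolynomial in
lemma good_add {r e : ℕ} {P Q : MvPolynomial (Fin r) F3} (hP : GoodPoly e P)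
    (hQ : GoodPoly e Q) : GoodPoly e (P + Q) := by
  refine ⟨?_, fun i => (degreeOf_add_le i P Q).trans (max_le (hP.2 i) (hQ.2 i))⟩
  rcases hP.1 with h | h
  · simpa [h] using hQ.1
  · rcases hQ.1 with h' | h'
    · right; simpa [h'] using h
    · right
      have := totalDegree_add P Q
      rcases le_total P.totalDegree Q.totalDegree with h2 | h2
      · rw [max_eq_right h2] at this; omega
      · rw [max_eq_left h2] at this; omega

open MvPolynomial in
lemma lin_total {r : ℕ} (a : F3) :
    (X 0 - C a : MvPolynomial (Fin (r+1)) F3).totalDegree ≤ 1 :=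
  (totalDegree_sub_C_le _ _).trans (by simp)

open MvPolynomial in
lemma lin_deg {r : ℕ} (a : F3) (j : Fin r) :
    (X 0 - C a : MvPolynomial (Fin (r+1)) F3).degreeOf j.succ = 0 := by
  have h := degreeOf_sub_le j.succ (X 0 : MvPolynomial (Fin (r+1)) F3) (C a)
  rw [degreeOf_C, degreeOf_X] at h
  simpa using h

open MvPolynomial in
lemma interp (r : ℕ) : ∀ (e : ℕ) (S : Finset (Pt r)), S.card ^ 2 < 3 ^ e → ∀ g : Fn r,
    ∃ P : MvPolynomial (Fin r) F3, GoodPoly e P ∧ ∀ x ∈ S, eval x P = g x := by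
  classical
  induction r with
  | zero =>
    intro e S hS g
    rcases Nat.eq_zero_or_pos e with rfl | he
    · have : S = ∅ := by
        rw [← Finset.card_eq_zero]; by_contra h
        have := Nat.pos_of_ne_zero h
        simp at hS; simp [hS] at this
      exact ⟨0, good_zero _, by simp [this]⟩
    · refine ⟨C (g 0), ⟨Or.inr (by rw [totalDegree_C]; omega), fun i => i.elim0⟩, fun x _ => ?_⟩
      rw [eval_C, Subsingleton.elim x 0]
  | succ r ih =>
    intro e S hS g
    rcases Nat.eq_zero_or_pos e with rfl | he
    · have : S = ∅ := by
        rw [← Finset.card_eq_zero]; by_contra h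
        have := Nat.pos_of_ne_zero h
        simp at hS; simp [hS] at this
      exact ⟨0, good_zero _, by simp [this]⟩
    let T : F3 → Finset (Pt r) := fun z => (S.filter (fun x => x 0 = z)).image Fin.tail
    have hTc : ∀ z, (T z).card ≤ (S.filter (fun x => x 0 = z)).card :=
      fun z => Finset.card_image_le
    have hT : ∀ x ∈ S, Fin.tail x ∈ T (x 0) := fun x hx =>
      Finset.mem_image_of_mem _ (by simp [hx])
    obtain ⟨a, b, c, hab, hac, hbc, hall, h1, h2⟩ :=
      exists_order (fun z => (S.filter (fun x => x 0 = z)).card)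
    have huniv : (Finset.univ : Finset F3) = {a, b, c} := by
      ext z; simpa using hall z
    have hsum : S.card = (S.filter (fun x => x 0 = a)).card + (S.filter (fun x => x 0 = b)).card
        + (S.filter (fun x => x 0 = c)).card := by
      rw [Finset.card_eq_sum_card_fiberwise (f := fun x => x 0) (t := Finset.univ) (by simp),
        huniv, Finset.sum_insert (by simp [hab, hac]), Finset.sum_pair hbc, add_assoc]
    have ca : (T a).card ^ 2 < 3 ^ e := by
      refine lt_of_le_of_lt (Nat.pow_le_pow_left ?_ 2) hS
      have := hTc a; omega
    have cb : (T b).card ^ 2 < 3 ^ (e - 1) := by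
      have h3 : 2 * (T b).card ≤ S.card := by have := hTc b; omega
      have h4 := Nat.pow_le_pow_left h3 2
      obtain ⟨k, rfl⟩ : ∃ k, e = k + 1 := ⟨e - 1, by omega⟩
      rw [pow_succ 3] at hS
      have hk : 0 < 3 ^ k := by positivity
      simp only [Nat.add_sub_cancel]
      nlinarith
    have cc : (T c).card ^ 2 < 3 ^ (e - 2) := by
      have h3 : 3 * (T c).card ≤ S.card := by have := hTc c; omega
      have h4 := Nat.pow_le_pow_left h3 2
      rcases Nat.lt_or_ge e 2 with h5 | h5
      · obtain rfl : e = 1 := by omega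
        simp only [pow_one] at hS
        have h6 : (T c).card ^ 2 < 1 := by nlinarith
        simpa using h6
      · obtain ⟨k, rfl⟩ : ∃ k, e = k + 2 := ⟨e - 2, by omega⟩
        rw [pow_add 3] at hS
        simp only [Nat.add_sub_cancel]
        nlinarith
    obtain ⟨A, hA, hA'⟩ := ih e (T a) ca (fun y => g (Fin.cons a y))
    obtain ⟨B, hB, hB'⟩ := ih (e-1) (T b) cb (fun y => (g (Fin.cons b y) - eval y A) / (b - a))
    obtain ⟨D, hD, hD'⟩ := ih (e-2) (T c) cc
      (fun y => (g (Fin.cons c y) - eval y A - (c - a) * eval y B) / ((c - a) * (c - b)))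
    refine ⟨1 * rename Fin.succ A + (X 0 - C a) * rename Fin.succ B
      + ((X 0 - C a) * (X 0 - C b)) * rename Fin.succ D, ?_, ?_⟩
    · refine good_add (good_add (good_mul (k := 0) A hA _ (by simp) (by omega) ?_)
        (good_mul (k := 1) B hB _ (lin_total a) (by omega) (lin_deg a)))
        (good_mul (k := 2) D hD _ ?_ le_rfl ?_)
      · intro j
        rw [← C_1, degreeOf_C]
      · have h3 := totalDegree_mul (X 0 - C a : MvPolynomial (Fin (r+1)) F3) (X 0 - C b)
        have h4 := lin_total (r := r) a
        have h5 := lin_total (r := r) b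
        omega
      · intro j
        have h3 := degreeOf_mul_le j.succ (X 0 - C a : MvPolynomial (Fin (r+1)) F3) (X 0 - C b)
        rw [lin_deg, lin_deg] at h3
        omega
    · intro x hx
      have hx' := hT x hx
      have hcons : Fin.cons (x 0) (Fin.tail x) = x := Fin.cons_self_tail x
      have hev : ∀ P : MvPolynomial (Fin r) F3,
          eval x (rename Fin.succ P) = eval (Fin.tail x) P := by
        intro P; rw [eval_rename]; rfl
      simp only [map_add, map_mul, map_sub, map_one, eval_X, eval_C, hev]
      have nba : b - a ≠ 0 := sub_ne_zero.2 hab.symm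
      have nca : c - a ≠ 0 := sub_ne_zero.2 hac.symm
      have ncb : c - b ≠ 0 := sub_ne_zero.2 hbc.symm
      rcases hall (x 0) with h | h | h <;> rw [h] at hx' hcons
      · have := hA' _ hx'
        rw [hcons] at this
        rw [h, this]; ring
      · have := hB' _ hx'
        rw [hcons, eq_div_iff nba] at this
        rw [h]; linear_combination this
      · have := hD' _ hx'
        rw [hcons, eq_div_iff (mul_ne_zero nca ncb)] at this
        rw [h]; linear_combination this

lemma mem_polyFinset {r d : ℕ} {p : Fn r} : p ∈ polyFinset r d ↔ p ∈ PolySet r d := by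
  simp [polyFinset]

open MvPolynomial in
lemma polySet_add {r d : ℕ} {p q : Fn r} (hp : p ∈ PolySet r d) (hq : q ∈ PolySet r d) :
    p + q ∈ PolySet r d := by
  obtain ⟨P, h1, h2, h3⟩ := hp
  obtain ⟨Q, k1, k2, k3⟩ := hq
  exact ⟨P + Q, (totalDegree_add P Q).trans (max_le h1 k1),
    fun i => (degreeOf_add_le i P Q).trans (max_le (h2 i) (k2 i)),
    fun x => by simp [h3, k3]⟩

open MvPolynomial in
lemma polySet_neg {r d : ℕ} {p : Fn r} (hp : p ∈ PolySet r d) : -p ∈ PolySet r d := by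
  obtain ⟨P, h1, h2, h3⟩ := hp
  exact ⟨-P, by rwa [totalDegree_neg], fun i => by rw [degreeOf_neg]; exact h2 i,
    fun x => by simp [h3]⟩

lemma polySet_interp {r d t : ℕ} (ht : t ^ 2 < 3 ^ (d + 1))
    (x : Fin t → Pt r) (hx : Function.Injective x) (b : Fin t → F3) :
    ∃ p ∈ PolySet r d, ∀ i, p (x i) = b i := by
  classical
  obtain ⟨P, hP, hP'⟩ := interp r (d + 1) (Finset.univ.image x)
    (by rwa [Finset.card_image_of_injective _ hx, Finset.card_univ, Fintype.card_fin])
    (Function.extend x b 0)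
  refine ⟨fun y => MvPolynomial.eval y P, ⟨P, ?_, hP.2, fun _ => rfl⟩, fun i => ?_⟩
  · rcases hP.1 with h | h
    · simp [h]
    · omega
  · rw [← hx.extend_apply b 0 i]
    exact hP' _ (by simp)

/-- A uniformly random polynomial in `P_{r,d}` is `t`-wise independent for
`t < 3^{(d+1)/2}`: its values at any `t` distinct points are uniform in `F₃^t`. -/
theorem stmt8 (r d t : ℕ) (ht : (t : ℝ) < (3 : ℝ) ^ (((d : ℝ) + 1) / 2))
    (x : Fin t → Pt r) (hx : Function.Injective x) (b : Fin t → F3) :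
    (((polyFinset r d).filter (fun p => ∀ i, p (x i) = b i)).card : ℝ)
        / ((polyFinset r d).card : ℝ) = 1 / 3 ^ t := by
  have ht2 : t ^ 2 < 3 ^ (d + 1) := by
    have h1 : (t : ℝ) ^ 2 < ((3 : ℝ) ^ (((d : ℝ) + 1) / 2)) ^ 2 :=
      pow_lt_pow_left₀ ht (Nat.cast_nonneg t) (by norm_num)
    rw [← Real.rpow_natCast (_ ^ _) 2, ← Real.rpow_mul (by norm_num)] at h1
    have h2 : ((d : ℝ) + 1) / 2 * ((2 : ℕ) : ℝ) = ((d + 1 : ℕ) : ℝ) := by push_cast; ring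
    rw [h2, Real.rpow_natCast] at h1
    exact_mod_cast h1
  have hle : ∀ b b' : Fin t → F3,
      ((polyFinset r d).filter (fun p => ∀ i, p (x i) = b i)).card ≤
      ((polyFinset r d).filter (fun p => ∀ i, p (x i) = b' i)).card := by
    intro b b'
    obtain ⟨q, hq, hq'⟩ := polySet_interp ht2 x hx (b' - b)
    refine Finset.card_le_card_of_injOn (fun p => p + q) ?_ (fun p _ p' _ h => by simpa using h)
    intro p hp
    simp only [Finset.coe_filter, Set.mem_ofPred_eq, mem_polyFinset] at hp ⊢
    exact ⟨polySet_add hp.1 hq, fun i => by simp [hp.2 i, hq' i]⟩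
  have hcard : (polyFinset r d).card =
      3 ^ t * ((polyFinset r d).filter (fun p => ∀ i, p (x i) = b i)).card := by
    rw [Finset.card_eq_sum_card_fiberwise (f := fun p i => p (x i)) (t := Finset.univ) (by simp)]
    rw [Finset.sum_congr rfl (g := fun _ =>
      ((polyFinset r d).filter (fun p => ∀ i, p (x i) = b i)).card)]
    · simp [ZMod.card]
    · intro b' _
      simp only [funext_iff]
      exact le_antisymm (hle b' b) (hle b b')
  have hpos : (polyFinset r d).card ≠ 0 := by
    obtain ⟨q, hq, _⟩ := polySet_interp ht2 x hx b
    exact Finset.card_ne_zero_of_mem (mem_polyFinset.2 hq)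
  have hcR : ((polyFinset r d).card : ℝ) =
      3 ^ t * (((polyFinset r d).filter (fun p => ∀ i, p (x i) = b i)).card : ℝ) := by
    exact_mod_cast hcard
  have hposR : ((polyFinset r d).card : ℝ) ≠ 0 := by exact_mod_cast hpos
  rw [div_eq_div_iff hposR (by positivity), hcR]
  ring
end

section
/- There exist a universal constant c > 0 and d₀ ∈ ℕ such that for all d ≥ d₀, all r ∈ ℕ and every α : F₃^r → F₃ with Δ(α, P_{r,2d}^⊥) > 3^{d/2}: |E_{p ∈ P_{r,d}}[ω^{⟨α, p²⟩}]| ≤ 3^{−c·3^{d/9}}, where p is uniform on P_{r,d} and p² denotes the pointwise square of p. -/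
open scoped BigOperators

/-- Hamming distance between two functions `F₃^r → F₃`. -/
def hammingD {r : ℕ} (f g : Fn r) : ℕ := (Finset.univ.filter fun x => f x ≠ g x).card


/-! ### Basic objects -/

namespace LowRank

open Module


/-- The monomial function `x ↦ ∏ x_i^{e_i}`. -/
def mono {r : ℕ} (e : Fin r →₀ ℕ) : Fn r := fun x => ∏ i, x i ^ e i

lemma mono_zero {r : ℕ} : mono (0 : Fin r →₀ ℕ) = 1 := by
  funext x; simp [mono]

lemma mono_add {r : ℕ} (e f : Fin r →₀ ℕ) : mono (e + f) = mono e * mono f := by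
  funext x; simp [mono, pow_add, Finset.prod_mul_distrib]

/-- Functions of degree at most `d`. -/
def PS (r d : ℕ) : Submodule F3 (Fn r) :=
  Submodule.span F3 (mono '' {e | e.degree ≤ d})

lemma mono_mem {r d : ℕ} {e : Fin r →₀ ℕ} (h : e.degree ≤ d) : mono e ∈ PS r d :=
  Submodule.subset_span ⟨e, h, rfl⟩

lemma one_mem_PS (r d : ℕ) : (1 : Fn r) ∈ PS r d := by
  rw [← mono_zero]; exact mono_mem (by simp)

lemma PS_mono {r a b : ℕ} (h : a ≤ b) : PS r a ≤ PS r b :=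
  Submodule.span_mono (Set.image_mono fun _ he => le_trans he h)

lemma mul_mem_PS {r a b : ℕ} {p q : Fn r} (hp : p ∈ PS r a) (hq : q ∈ PS r b) :
    p * q ∈ PS r (a + b) := by
  have h : PS r a * PS r b ≤ PS r (a + b) := by
    rw [PS, PS, Submodule.span_mul_span, Submodule.span_le]
    rintro _ ⟨_, ⟨e, he, rfl⟩, _, ⟨f, hf, rfl⟩, rfl⟩
    simp only [Set.mem_ofPred_eq] at he hf
    show mono e * mono f ∈ PS r (a + b)
    rw [← mono_add]
    exact mono_mem (by rw [map_add]; omega)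
  exact h (Submodule.mul_mem_mul hp hq)

lemma reduce_one {r : ℕ} (e : Fin r →₀ ℕ) (i : Fin r) (hi : 3 ≤ e i) :
    ∃ e' : Fin r →₀ ℕ, e'.degree < e.degree ∧ mono e' = mono e := by
  have hle : Finsupp.single i 2 ≤ e := by
    rw [Finsupp.single_le_iff]; omega
  obtain ⟨g, rfl⟩ := exists_add_of_le hle
  refine ⟨g, by simp, ?_⟩
  have hg : Finsupp.single i 1 ≤ g := by
    rw [Finsupp.single_le_iff]
    simp at hi; omega
  obtain ⟨g', rfl⟩ := exists_add_of_le hg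
  rw [← add_assoc, mono_add, mono_add, ← Finsupp.single_add]
  congr 1
  funext x
  have : ∀ k : ℕ, mono (Finsupp.single i k) x = x i ^ k := by
    intro k
    rw [mono, Finset.prod_eq_single i]
    · simp
    · intro j _ hj; simp [hj.symm]
    · simp
  rw [this, this]
  generalize x i = y
  revert y; decide

lemma reduce_all {r : ℕ} (n : ℕ) : ∀ (e : Fin r →₀ ℕ), e.degree = n →
    ∃ e' : Fin r →₀ ℕ, e'.degree ≤ e.degree ∧ (∀ i, e' i ≤ 2) ∧ mono e' = mono e := by
  induction n using Nat.strong_induction_on with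
  | _ n ih =>
    intro e he
    by_cases h : ∀ i, e i ≤ 2
    · exact ⟨e, le_rfl, h, rfl⟩
    · push Not at h
      obtain ⟨i, hi⟩ := h
      obtain ⟨e1, h1, h2⟩ := reduce_one e i hi
      obtain ⟨e2, h3, h4, h5⟩ := ih e1.degree (he ▸ h1) e1 rfl
      exact ⟨e2, h3.trans h1.le, h4, h5.trans h2⟩

lemma mem_PolySet_iff {r d : ℕ} (g : Fn r) : g ∈ PolySet r d ↔ g ∈ PS r d := by
  constructor
  · rintro ⟨p, hp, -, hg⟩
    have : g = ∑ e ∈ p.support, p.coeff e • mono e := by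
      funext x
      rw [hg, MvPolynomial.eval_eq']
      simp [mono]
    rw [this]
    refine Submodule.sum_mem _ fun e he => Submodule.smul_mem _ _ (mono_mem ?_)
    have h := MvPolynomial.le_totalDegree he
    exact (show e.degree ≤ p.totalDegree from h).trans hp
  · intro hg
    induction hg using Submodule.span_induction with
    | mem _ h =>
      obtain ⟨e, he, rfl⟩ := h
      obtain ⟨e', h1, h2, h3⟩ := reduce_all _ e rfl
      rw [← h3]
      refine ⟨MvPolynomial.monomial e' 1, ?_, ?_, ?_⟩
      · rw [MvPolynomial.totalDegree_monomial _ one_ne_zero]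
        exact h1.trans he
      · intro i
        exact (MvPolynomial.degreeOf_monomial_eq e' i one_ne_zero).trans_le (h2 i)
      · intro x
        rw [MvPolynomial.eval_monomial]
        simp [mono, Finsupp.prod_fintype]
    | zero => exact ⟨0, by simp, by simp, by simp⟩
    | add f g _ _ hf hg =>
      obtain ⟨p, h1, h2, h3⟩ := hf
      obtain ⟨q, k1, k2, k3⟩ := hg
      refine ⟨p + q, ?_, ?_, ?_⟩
      · exact (MvPolynomial.totalDegree_add _ _).trans (max_le h1 k1)
      · intro i
        exact (MvPolynomial.degreeOf_add_le _ _ _).trans (max_le (h2 i) (k2 i))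
      · intro x; simp [h3, k3]
    | smul c f _ hf =>
      obtain ⟨p, h1, h2, h3⟩ := hf
      refine ⟨MvPolynomial.C c * p, ?_, ?_, ?_⟩
      · rw [← MvPolynomial.smul_eq_C_mul]
        exact (MvPolynomial.totalDegree_smul_le _ _).trans h1
      · intro i
        exact (MvPolynomial.degreeOf_C_mul_le _ _ _).trans (h2 i)
      · intro x; simp [h3]

/-- The functional `f ↦ ⟨γ, f⟩`. -/
def LF {r : ℕ} (γ : Fn r) : Fn r →ₗ[F3] F3 where
  toFun f := dotF γ f
  map_add' f g := by simp [dotF, mul_add, Finset.sum_add_distrib]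
  map_smul' c f := by
    simp only [dotF, Pi.smul_apply, smul_eq_mul, RingHom.id_apply, Finset.mul_sum]
    exact Finset.sum_congr rfl fun _ _ => by ring

lemma LF_apply {r : ℕ} (γ f : Fn r) : LF γ f = dotF γ f := rfl

/-- The left kernel of the form `⟨γ, pq⟩` on degree `a` times degree `b`. -/
def MK {r : ℕ} (γ : Fn r) (a b : ℕ) : Submodule F3 (Fn r) where
  carrier := {p | p ∈ PS r a ∧ ∀ q ∈ PS r b, LF γ (p * q) = 0}
  zero_mem' := ⟨Submodule.zero_mem _, by simp⟩
  add_mem' := by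
    rintro p p' ⟨h1, h2⟩ ⟨h3, h4⟩
    exact ⟨Submodule.add_mem _ h1 h3, fun q hq => by
      rw [add_mul, map_add, h2 q hq, h4 q hq, add_zero]⟩
  smul_mem' := by
    rintro c p ⟨h1, h2⟩
    exact ⟨Submodule.smul_mem _ _ h1, fun q hq => by
      rw [smul_mul_assoc, map_smul, h2 q hq, smul_zero]⟩

lemma mem_MK {r : ℕ} {γ : Fn r} {a b : ℕ} {p : Fn r} :
    p ∈ MK γ a b ↔ p ∈ PS r a ∧ ∀ q ∈ PS r b, LF γ (p * q) = 0 := Iff.rfl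

lemma MK_mono {r : ℕ} {γ : Fn r} {a a' b b' : ℕ} (ha : a ≤ a') (hb : b' ≤ b) :
    MK γ a b ≤ MK γ a' b' := fun _ hp =>
  ⟨PS_mono ha hp.1, fun q hq => hp.2 q (PS_mono hb hq)⟩

lemma mul_mem_MK {r : ℕ} {γ : Fn r} {a b k : ℕ} {p m : Fn r} (hp : p ∈ MK γ a (b + k))
    (hm : m ∈ PS r k) : p * m ∈ MK γ (a + k) b :=
  ⟨mul_mem_PS hp.1 hm, fun q hq => by
    rw [mul_assoc]
    refine hp.2 _ ?_
    rw [add_comm]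
    exact mul_mem_PS hm hq⟩

/-- The bilinear form on degree-`d` functions. -/
def BF {r : ℕ} (γ : Fn r) (d : ℕ) : PS r d →ₗ[F3] PS r d →ₗ[F3] F3 :=
  LinearMap.mk₂ F3 (fun p q => LF γ ((p : Fn r) * (q : Fn r)))
    (by intros; simp [add_mul]) (by intros; simp)
    (by intros; simp [mul_add]) (by intros; simp)

lemma BF_apply {r : ℕ} (γ : Fn r) (d : ℕ) (p q : PS r d) :
    BF γ d p q = LF γ ((p : Fn r) * (q : Fn r)) := rfl

/-- The rank of the form. -/
noncomputable def rk {r : ℕ} (γ : Fn r) (d : ℕ) : ℕ := finrank F3 (LinearMap.range (BF γ d))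

lemma mem_MK_of_BF {r : ℕ} {γ : Fn r} {d : ℕ} {p : PS r d} (h : BF γ d p = 0) :
    (p : Fn r) ∈ MK γ d d :=
  ⟨p.2, fun q hq => by
    have := congrArg (fun l => l ⟨q, hq⟩) h
    simpa [BF_apply] using this⟩

lemma card_le_rk {r : ℕ} {γ : Fn r} {d : ℕ} {ι : Type*} [Fintype ι] (v : ι → Fn r)
    (hv : ∀ i, v i ∈ PS r d)
    (h : ∀ c : ι → F3, ∑ i, c i • v i ∈ MK γ d d → ∀ i, c i = 0) :
    Fintype.card ι ≤ rk γ d := by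
  let w : ι → LinearMap.range (BF γ d) := fun i => ⟨BF γ d ⟨v i, hv i⟩, ⟨_, rfl⟩⟩
  have hw : LinearIndependent F3 w := by
    rw [Fintype.linearIndependent_iff]
    intro c hc
    apply h
    have h1 : BF γ d (∑ i, c i • (⟨v i, hv i⟩ : PS r d)) = 0 := by
      have := congrArg Subtype.val hc
      rw [map_sum]
      simp only [map_smul]
      simpa [w] using this
    have := mem_MK_of_BF h1
    simpa using this
  exact hw.fintype_card_le_finrank

lemma rank_aux {K V W₁ W₂ W₃ : Type*} [Field K] [AddCommGroup V] [Module K V]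
    [FiniteDimensional K V] [AddCommGroup W₁] [Module K W₁] [AddCommGroup W₂] [Module K W₂]
    [AddCommGroup W₃] [Module K W₃] [FiniteDimensional K W₂]
    (f : V →ₗ[K] W₁) (g : V →ₗ[K] W₂) (h : V →ₗ[K] W₃)
    (hk : ∀ v, f v = 0 → g v = 0 → h v = 0) :
    finrank K (LinearMap.range h) ≤ finrank K (LinearMap.range f) + finrank K W₂ := by
  let Ψ := (LinearMap.rangeRestrict f).prod g
  have hker : LinearMap.ker Ψ ≤ LinearMap.ker h := by
    intro p hp
    rw [LinearMap.mem_ker] at hp ⊢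
    refine hk p ?_ ?_
    · have := congrArg (fun z => (z.1 : W₁)) hp
      simpa [Ψ] using this
    · have := congrArg (fun z => z.2) hp
      simpa [Ψ] using this
  have e1 := LinearMap.finrank_range_add_finrank_ker h
  have e2 := LinearMap.finrank_range_add_finrank_ker Ψ
  have e3 := Submodule.finrank_mono hker
  have e4 := Submodule.finrank_le (LinearMap.range Ψ)
  rw [finrank_prod] at e4
  omega

lemma rk_sub_le {r : ℕ} (γ β : Fn r) (d : ℕ) : rk (γ - β) d ≤ rk γ d + supp β := by
  classical
  let S := {x // β x ≠ 0}
  have hS : Fintype.card S = supp β := by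
    rw [Fintype.card_subtype]; rfl
  let ev : PS r d →ₗ[F3] (S → F3) :=
    { toFun := fun p x => (p : Fn r) x.1
      map_add' := by intros; rfl
      map_smul' := by intros; rfl }
  have := rank_aux (BF γ d) ev (BF (γ - β) d) (by
    intro p h1 hp
    have h2 : ∀ x, β x * (p : Fn r) x = 0 := by
      intro x
      by_cases hx : β x = 0
      · simp [hx]
      · have := congrArg (fun z => z ⟨x, hx⟩) hp
        have : (p : Fn r) x = 0 := by simpa [ev] using this
        simp [this]
    ext q
    have h3 := congrArg (fun l => l q) h1
    simp only [BF_apply, LF_apply, dotF, LinearMap.zero_apply, Pi.sub_apply, Pi.mul_apply] at h3 ⊢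
    rw [← h3]
    refine Finset.sum_congr rfl fun x _ => ?_
    rw [sub_mul, ← mul_assoc (β x), h2, zero_mul, sub_zero])
  rw [Module.finrank_fintype_fun_eq_card, hS] at this
  exact this


/-! ### Leading monomials and flatness -/

/-- Span of the monomials strictly below `e` in the degree-lexicographic order. -/
def WS {r : ℕ} (e : Fin r →₀ ℕ) : Submodule F3 (Fn r) :=
  Submodule.span F3 (mono '' {f | toDegLex f < toDegLex e})

lemma mono_mem_WS {r : ℕ} {e f : Fin r →₀ ℕ} (h : toDegLex f < toDegLex e) : mono f ∈ WS e :=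
  Submodule.subset_span ⟨f, h, rfl⟩

lemma WS_mul {r : ℕ} {f : Fin r →₀ ℕ} (g : Fin r →₀ ℕ) {w : Fn r} (hw : w ∈ WS f) :
    w * mono g ∈ WS (f + g) := by
  induction hw using Submodule.span_induction with
  | mem _ h =>
    obtain ⟨e, he, rfl⟩ := h
    rw [← mono_add]
    refine mono_mem_WS ?_
    rw [toDegLex_add, toDegLex_add]
    exact add_lt_add_left he _
  | zero => rw [zero_mul]; exact Submodule.zero_mem _
  | add p q _ _ hp hq => rw [add_mul]; exact Submodule.add_mem _ hp hq
  | smul c p _ hp => rw [smul_mul_assoc]; exact Submodule.smul_mem _ _ hp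

lemma lt_of_degree_lt {r : ℕ} {e f : Fin r →₀ ℕ} (h : f.degree < e.degree) :
    toDegLex f < toDegLex e := by
  rw [Finsupp.DegLex.lt_iff]; exact Or.inl h

lemma degree_le_of_lt {r : ℕ} {e f : Fin r →₀ ℕ} (h : toDegLex f < toDegLex e) :
    f.degree ≤ e.degree := Finsupp.DegLex.monotone_degree h.le

lemma WS_le {r : ℕ} (e : Fin r →₀ ℕ) : WS e ≤ PS r e.degree :=
  Submodule.span_mono (Set.image_mono fun _ he => degree_le_of_lt he)

lemma card_le_rk_of_lead {r : ℕ} {γ : Fn r} {d : ℕ} (D : Finset (Fin r →₀ ℕ))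
    (hD : ∀ f ∈ D, f.degree ≤ d)
    (h : ∀ f ∈ D, ∀ w ∈ WS f, mono f + w ∉ MK γ d d) : D.card ≤ rk γ d := by
  classical
  rw [← Fintype.card_coe]
  refine card_le_rk (fun f : D => mono f.1) (fun f => mono_mem (hD _ f.2)) ?_
  intro c hc
  by_contra! hne
  obtain ⟨i, hi⟩ := hne
  obtain ⟨f, hf, hmax⟩ := Finset.exists_max_image (Finset.univ.filter fun f : D => c f ≠ 0)
    (fun f => toDegLex f.1) ⟨i, by simpa using hi⟩
  have hcf : c f ≠ 0 := by simpa using hf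
  have hw : ∑ g ∈ Finset.univ.erase f, c g • mono g.1 ∈ WS f.1 := by
    refine Submodule.sum_mem _ fun g hg => ?_
    by_cases h0 : c g = 0
    · rw [h0, zero_smul]; exact Submodule.zero_mem _
    · refine Submodule.smul_mem _ _ (mono_mem_WS ?_)
      refine lt_of_le_of_ne (hmax g (by simpa using h0)) fun heq => ?_
      exact (Finset.ne_of_mem_erase hg) (Subtype.ext (toDegLex_injective heq))
  refine h f.1 f.2 ((c f)⁻¹ • ∑ g ∈ Finset.univ.erase f, c g • mono g.1)
    (Submodule.smul_mem _ _ hw) ?_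
  have h2 := Submodule.smul_mem _ (c f)⁻¹ hc
  rw [← Finset.add_sum_erase _ _ (Finset.mem_univ f), smul_add, smul_smul,
    inv_mul_cancel₀ hcf, one_smul] at h2
  exact h2

lemma card_Iic_sq {r : ℕ} (e : Fin r →₀ ℕ) (he : ∀ i, e i ≤ 2) :
    3 ^ e.degree ≤ (Finset.Iic e).card ^ 2 := by
  rw [Finsupp.card_Iic, ← Finset.prod_pow]
  have : e.degree = ∑ i ∈ e.support, e i := rfl
  rw [this, ← Finset.prod_pow_eq_pow_sum]
  refine Finset.prod_le_prod' fun i _ => ?_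
  have := he i
  rw [Nat.card_Iic]
  interval_cases e i <;> norm_num

lemma le_two_of_notMem {r : ℕ} (e : Fin r →₀ ℕ) (h : mono e ∉ WS e) : ∀ i, e i ≤ 2 := by
  intro i
  by_contra! hi
  obtain ⟨e', h1, h2⟩ := reduce_one e i hi
  exact h (h2 ▸ mono_mem_WS (lt_of_degree_lt h1))

lemma flat_mono {r : ℕ} {γ : Fn r} {d t : ℕ} (hrk : rk γ d ^ 2 < 3 ^ t) (e : Fin r →₀ ℕ)
    (h1 : t ≤ e.degree) (h2 : e.degree ≤ d) : mono e ∈ WS e ⊔ MK γ e.degree (d - e.degree) := by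
  by_contra hcon
  have he := le_two_of_notMem e fun h => hcon (Submodule.mem_sup_left h)
  have hle : (Finset.Iic e).card ≤ rk γ d := by
    refine card_le_rk_of_lead _ ?_ ?_
    · intro f hf
      rw [Finset.mem_Iic] at hf
      obtain ⟨g, rfl⟩ := exists_add_of_le hf
      rw [map_add] at h2; omega
    · intro f hf w hw hm
      rw [Finset.mem_Iic] at hf
      obtain ⟨g, rfl⟩ := exists_add_of_le hf
      apply hcon
      have hd : (f + g).degree = f.degree + g.degree := map_add _ _ _
      have h3 : mono f + w ∈ MK γ f.degree d :=
        ⟨Submodule.add_mem _ (mono_mem le_rfl) (WS_le f hw), hm.2⟩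
      have h4 : (mono f + w) * mono g ∈ MK γ (f + g).degree (d - (f + g).degree) := by
        rw [hd]
        refine mul_mem_MK (MK_mono le_rfl ?_ h3) (mono_mem le_rfl)
        omega
      have h5 : mono (f + g) = -(w * mono g) + (mono f + w) * mono g := by
        rw [mono_add]; ring
      rw [h5]
      exact Submodule.add_mem_sup (Submodule.neg_mem _ (WS_mul g hw)) h4
  have := card_Iic_sq e he
  have h6 : 3 ^ t ≤ 3 ^ e.degree := Nat.pow_le_pow_right (by norm_num) h1
  have h7 := Nat.pow_le_pow_left hle 2
  omega

lemma flat_PS {r : ℕ} {γ : Fn r} {d t : ℕ} (hrk : rk γ d ^ 2 < 3 ^ t) {a : ℕ} (h0 : 1 ≤ a)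
    (h1 : t ≤ a) (h2 : a ≤ d) : PS r a ≤ PS r (a - 1) ⊔ MK γ a (d - a) := by
  rw [PS, Submodule.span_le]
  have key : ∀ x : DegLex (Fin r →₀ ℕ), (ofDegLex x).degree ≤ a →
      mono (ofDegLex x) ∈ PS r (a - 1) ⊔ MK γ a (d - a) := by
    intro x
    induction x using WellFoundedLT.induction with
    | _ x ih =>
      intro hx
      by_cases hlt : (ofDegLex x).degree ≤ a - 1
      · exact Submodule.mem_sup_left (mono_mem hlt)
      · have hxa : (ofDegLex x).degree = a := by omega
        have := flat_mono hrk (ofDegLex x) (hxa ▸ h1) (hxa ▸ h2)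
        rw [hxa] at this
        refine (sup_le ?_ le_sup_right : WS (ofDegLex x) ⊔ MK γ a (d - a) ≤ _) this
        rw [WS, Submodule.span_le]
        rintro _ ⟨f, hf, rfl⟩
        exact ih (toDegLex f) hf ((degree_le_of_lt hf).trans hx)
  rintro _ ⟨e, he, rfl⟩
  exact key (toDegLex e) he

lemma MK_ext {r : ℕ} {γ : Fn r} {d t : ℕ} (hrk : rk γ d ^ 2 < 3 ^ t) {a b : ℕ} (h0 : 1 ≤ b)
    (h1 : t ≤ b) (h2 : a + b ≤ d) : MK γ a (b - 1) ≤ MK γ a b := by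
  intro p hp
  refine ⟨hp.1, fun q hq => ?_⟩
  obtain ⟨q1, hq1, q2, hq2, rfl⟩ := Submodule.mem_sup.1 (flat_PS hrk h0 h1 (by omega) hq)
  rw [mul_add, map_add, hp.2 q1 hq1, zero_add, mul_comm]
  exact hq2.2 p (PS_mono (by omega) hp.1)

/-! ### Vanishing in high degree -/

lemma exists_le_degree {r : ℕ} (w : Fin r →₀ ℕ) : ∀ j : ℕ, j ≤ w.degree →
    ∃ n ≤ w, n.degree = j := by
  intro j
  induction j with
  | zero => intro _; exact ⟨0, zero_le, by simp⟩
  | succ j ih =>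
    intro hj
    obtain ⟨n, hn, hnd⟩ := ih (by omega)
    obtain ⟨g, rfl⟩ := exists_add_of_le hn
    rw [map_add] at hj
    have hg : g ≠ 0 := by rintro rfl; simp at hj; omega
    obtain ⟨i, hi⟩ := Finsupp.ne_iff.1 hg
    refine ⟨n + Finsupp.single i 1, ?_, by simp [hnd]⟩
    refine add_le_add le_rfl ?_
    rw [Finsupp.single_le_iff]
    simp at hi; omega

lemma exists_filter {r : ℕ} (e : Fin r →₀ ℕ) (he : ∀ i, e i ≤ 2) (k : ℕ) (hk : k ≤ e.degree) :
    ∃ V : Finset (Fin r), ∑ i ∈ V, e i ≤ k ∧ k - 1 ≤ ∑ i ∈ V, e i := by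
  classical
  obtain ⟨V, hV, hmax⟩ := Finset.exists_max_image
    (Finset.univ.filter fun V : Finset (Fin r) => ∑ i ∈ V, e i ≤ k) (fun V => ∑ i ∈ V, e i)
    ⟨∅, by simp⟩
  have hV' : ∑ i ∈ V, e i ≤ k := by simpa using hV
  refine ⟨V, hV', ?_⟩
  by_contra! hlt
  have hex : ∃ i, i ∉ V ∧ e i ≠ 0 := by
    by_contra! hno
    have : e.degree = ∑ i ∈ V, e i := by
      rw [Finsupp.degree_eq_sum]
      exact (Finset.sum_subset (Finset.subset_univ V) fun i _ hi => hno i hi).symm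
    omega
  obtain ⟨i, hi, hei⟩ := hex
  have h2 := he i
  have := hmax (insert i V) (by
    simp only [Finset.mem_filter, Finset.mem_univ, true_and]
    rw [Finset.sum_insert hi]; omega)
  rw [Finset.sum_insert hi] at this
  omega

lemma exists_layer {r : ℕ} (e : Fin r →₀ ℕ) (he : ∀ i, e i ≤ 2) (k : ℕ) (hk : 2 * k ≤ e.degree) :
    ∃ D : Finset (Fin r →₀ ℕ), (∀ f ∈ D, f ≤ e ∧ f.degree = k) ∧ 3 ^ (k - 1) ≤ D.card ^ 2 := by
  classical
  obtain ⟨V, hV1, hV2⟩ := exists_filter e he k (by omega)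
  set v := e.filter (· ∈ V) with hv
  set w := e.filter (fun i => ¬ i ∈ V) with hw
  have hvw : v + w = e := Finsupp.filter_add_filter_not _ _
  have hdv : v.degree = ∑ i ∈ V, e i := by
    rw [Finsupp.degree_eq_sum]
    simp [hv, Finsupp.filter_apply, Finset.sum_ite_mem]
  have hdw : v.degree + w.degree = e.degree := by rw [← map_add, hvw]
  have hex : ∀ n : Fin r →₀ ℕ, n ≤ v → ∃ n' ≤ w, n'.degree = k - n.degree := by
    intro n _
    exact exists_le_degree w _ (by omega)
  choose! φ hφ1 hφ2 using hex
  have hdn : ∀ n ≤ v, n.degree ≤ k := by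
    intro n hn
    obtain ⟨g, hg⟩ := exists_add_of_le hn
    have : v.degree = n.degree + g.degree := by rw [hg, map_add]
    omega
  refine ⟨(Finset.Iic v).image fun n => n + φ n, ?_, ?_⟩
  · intro f hf
    obtain ⟨n, hn, rfl⟩ := Finset.mem_image.1 hf
    rw [Finset.mem_Iic] at hn
    refine ⟨?_, ?_⟩
    · rw [← hvw]; exact add_le_add hn (hφ1 n hn)
    · rw [map_add, hφ2 n hn]
      have := hdn n hn
      omega
  · rw [Finset.card_image_of_injOn]
    · refine le_trans ?_ (card_Iic_sq v ?_)
      · exact Nat.pow_le_pow_right (by norm_num) (by omega)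
      · intro i
        rw [hv, Finsupp.filter_apply]
        split_ifs
        · exact he i
        · omega
    · intro n hn n' hn' heq
      simp only [Finset.coe_Iic, Set.mem_Iic] at hn hn'
      ext i
      have hi := DFunLike.congr_fun heq i
      simp only [Finsupp.add_apply] at hi
      have a1 := hφ1 n hn i
      have a2 := hφ1 n' hn' i
      have a3 := hn i
      have a4 := hn' i
      simp only [hv, hw, Finsupp.filter_apply] at a1 a2 a3 a4
      by_cases hiV : i ∈ V
      · simp only [hiV, not_true_eq_false, if_false] at a1 a2; omega
      · simp only [hiV, if_false] at a3 a4; omega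

lemma vanish {r : ℕ} {γ : Fn r} {d T k : ℕ} (hT : ∀ p ∈ PS r T, LF γ p = 0)
    (hk : 2 * k ≤ T + 1) (hrk : rk γ d ^ 2 < 3 ^ (k - 1)) : ∀ p ∈ PS r (2 * d), LF γ p = 0 := by
  have key : ∀ x : DegLex (Fin r →₀ ℕ), (ofDegLex x).degree ≤ 2 * d →
      LF γ (mono (ofDegLex x)) = 0 := by
    intro x
    induction x using WellFoundedLT.induction with
    | _ x ih =>
      intro hx
      by_contra hne
      set e := ofDegLex x with he
      have hW : WS e ≤ LinearMap.ker (LF γ) := by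
        rw [WS, Submodule.span_le]
        rintro _ ⟨f, hf, rfl⟩
        exact ih (toDegLex f) hf ((degree_le_of_lt hf).trans hx)
      have he2 := le_two_of_notMem e fun h => hne (hW h)
      have heT : T < e.degree := by
        by_contra! hle
        exact hne (hT _ (mono_mem hle))
      obtain ⟨D, hD1, hD2⟩ := exists_layer e he2 (e.degree / 2) (by omega)
      have hle : D.card ≤ rk γ d := by
        refine card_le_rk_of_lead D (fun f hf => by rw [(hD1 f hf).2]; omega) ?_
        intro f hf w hw hm
        obtain ⟨h1, h2⟩ := hD1 f hf
        obtain ⟨g, hg⟩ := exists_add_of_le h1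
        have hdeg : e.degree = f.degree + g.degree := by rw [hg, map_add]
        have h3 := hm.2 (mono g) (mono_mem (by omega))
        have h4 : w * mono g ∈ WS e := hg ▸ WS_mul g hw
        have h5 : LF γ (w * mono g) = 0 := hW h4
        rw [add_mul, map_add, h5, add_zero, ← mono_add, ← hg] at h3
        exact hne h3
      have h6 : 3 ^ (k - 1) ≤ 3 ^ (e.degree / 2 - 1) :=
        Nat.pow_le_pow_right (by norm_num) (by omega)
      have h7 := Nat.pow_le_pow_left hle 2
      omega
  intro p hp
  have : PS r (2 * d) ≤ LinearMap.ker (LF γ) := by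
    rw [PS, Submodule.span_le]
    rintro _ ⟨e, he, rfl⟩
    exact key (toDegLex e) he
  exact this hp


/-! ### Interpolation by commuting operators -/

lemma interp_one {S : Type*} [CommRing S] [Algebra F3 S] (y : S) (hy : y ^ 3 = y) (c : F3) :
    y * (1 - (y - algebraMap F3 S c) ^ 2) =
      algebraMap F3 S c * (1 - (y - algebraMap F3 S c) ^ 2) := by
  have h3 : (3 : S) = 0 := by
    have : algebraMap F3 S 3 = 3 := map_ofNat _ _
    rw [← this, show (3 : F3) = 0 from rfl, map_zero]
  have hc : (algebraMap F3 S c) ^ 3 = algebraMap F3 S c := by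
    rw [← map_pow]; congr 1; revert c; decide
  linear_combination (-1 : S) * hy + hc + (y ^ 2 * algebraMap F3 S c - y * algebraMap F3 S c ^ 2) * h3

lemma interp_idem {S : Type*} [CommRing S] [Algebra F3 S] (y : S) (hy : y ^ 3 = y) (c : F3) :
    (1 - (y - algebraMap F3 S c) ^ 2) * (1 - (y - algebraMap F3 S c) ^ 2) =
      (1 - (y - algebraMap F3 S c) ^ 2) := by
  have h3 : (3 : S) = 0 := by
    have : algebraMap F3 S 3 = 3 := map_ofNat _ _
    rw [← this, show (3 : F3) = 0 from rfl, map_zero]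
  have hc : (algebraMap F3 S c) ^ 3 = algebraMap F3 S c := by
    rw [← map_pow]; congr 1; revert c; decide
  set z := algebraMap F3 S c
  have hu : (y - z) ^ 3 = y - z := by
    linear_combination hy - hc + (y * z ^ 2 - y ^ 2 * z) * h3
  linear_combination (y - z) * hu

lemma interp_sum {S : Type*} [CommRing S] [Algebra F3 S] (y : S) (hy : y ^ 3 = y) (k : ℕ) :
    ∑ c : F3, algebraMap F3 S (c ^ k) * (1 - (y - algebraMap F3 S c) ^ 2) = y ^ k := by
  induction k with
  | zero =>
    have h3 : (3 : S) = 0 := by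
      have : algebraMap F3 S 3 = 3 := map_ofNat _ _
      rw [← this, show (3 : F3) = 0 from rfl, map_zero]
    have : ∀ f : F3 → S, ∑ c : F3, f c = f 0 + f 1 + f 2 := fun f => Fin.sum_univ_three f
    rw [this]
    simp only [pow_zero, map_one, map_zero, map_ofNat]
    linear_combination (2 * y - y ^ 2 - 1) * h3
  | succ k ih =>
    rw [pow_succ, mul_comm, ← ih, Finset.mul_sum]
    refine Finset.sum_congr rfl fun c _ => ?_
    rw [pow_succ, map_mul, mul_left_comm y, interp_one y hy, mul_assoc]

lemma interp_act {r : ℕ} {S : Type*} [CommRing S] [Algebra F3 S] {C : Type*} [AddCommGroup C]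
    [Module F3 C] [FiniteDimensional F3 C] (act : S →ₐ[F3] Module.End F3 C)
    (y : Fin r → S) (hy : ∀ i, y i ^ 3 = y i) (u : C) (l : C →ₗ[F3] F3) :
    ∃ β : Fn r, supp β ≤ finrank F3 C ∧
      ∀ e : Fin r →₀ ℕ, dotF β (mono e) = l (act (∏ i, y i ^ e i) u) := by
  classical
  let E : Pt r → S := fun x => ∏ i, (1 - (y i - algebraMap F3 S (x i)) ^ 2)
  have hyE : ∀ x i, y i * E x = algebraMap F3 S (x i) * E x := by
    intro x i
    simp only [E]
    rw [← Finset.mul_prod_erase _ _ (Finset.mem_univ i), ← mul_assoc, interp_one _ (hy i),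
      mul_assoc]
  have hEE : ∀ x, E x * E x = E x := by
    intro x
    simp only [E]
    rw [← Finset.prod_mul_distrib]
    exact Finset.prod_congr rfl fun i _ => interp_idem _ (hy i) _
  have hEE' : ∀ x x', x ≠ x' → E x * E x' = 0 := by
    intro x x' hne
    obtain ⟨i, hi⟩ := Function.ne_iff.1 hne
    have h1 : algebraMap F3 S (x i - x' i) * (E x * E x') = 0 := by
      rw [map_sub, sub_mul, ← mul_assoc, ← hyE, mul_left_comm (algebraMap F3 S (x' i)), ← hyE]
      ring
    have h2 := congrArg (fun s => algebraMap F3 S (x i - x' i)⁻¹ * s) h1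
    simp only [mul_zero] at h2
    rwa [← mul_assoc, ← map_mul, inv_mul_cancel₀ (sub_ne_zero.2 hi), map_one, one_mul] at h2
  refine ⟨fun x => l (act (E x) u), ?_, ?_⟩
  · let I := {x : Pt r // l (act (E x) u) ≠ 0}
    have hI : supp (fun x => l (act (E x) u)) = Fintype.card I := by
      rw [Fintype.card_subtype]; rfl
    rw [hI]
    have hli : LinearIndependent F3 (fun x : I => act (E x.1) u) := by
      rw [Fintype.linearIndependent_iff]
      intro c hc x
      have h1 := congrArg (act (E x.1)) hc
      rw [map_sum, map_zero, Finset.sum_eq_single x] at h1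
      · rw [map_smul, ← Module.End.mul_apply, ← map_mul, hEE] at h1
        rcases smul_eq_zero.1 h1 with h | h
        · exact h
        · exact absurd (by rw [h, map_zero]) x.2
      · intro x' _ hne
        rw [map_smul, ← Module.End.mul_apply, ← map_mul, hEE' _ _ fun h => hne (Subtype.ext h.symm),
          map_zero, LinearMap.zero_apply, smul_zero]
      · simp
    exact hli.fintype_card_le_finrank
  · intro e
    have h1 : ∏ i, y i ^ e i = ∑ x : Pt r, mono e x • E x := by
      have : ∀ i, y i ^ e i =
          ∑ c : F3, algebraMap F3 S (c ^ e i) * (1 - (y i - algebraMap F3 S c) ^ 2) :=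
        fun i => (interp_sum (y i) (hy i) (e i)).symm
      rw [Finset.prod_congr rfl fun i _ => this i, Finset.prod_univ_sum, Fintype.piFinset_univ]
      refine Finset.sum_congr rfl fun x _ => ?_
      rw [Finset.prod_mul_distrib, Algebra.smul_def, mono, map_prod]
    rw [h1, map_sum, LinearMap.sum_apply, map_sum, dotF]
    refine Finset.sum_congr rfl fun x _ => ?_
    rw [map_smul, LinearMap.smul_apply, map_smul, smul_eq_mul, mul_comm]

lemma interp_ops {r : ℕ} {C : Type*} [AddCommGroup C]
    [Module F3 C] [FiniteDimensional F3 C] (X : Fin r → Module.End F3 C)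
    (hcomm : ∀ i j, X i * X j = X j * X i) (hX : ∀ i, X i ^ 3 = X i) (l : C →ₗ[F3] F3)
    (T : ℕ) (ν : (Fin r →₀ ℕ) → C)
    (hν : ∀ e i, e.degree + 1 ≤ T → ν (e + Finsupp.single i 1) = X i (ν e)) :
    ∃ β : Fn r, supp β ≤ finrank F3 C ∧
      ∀ e : Fin r →₀ ℕ, e.degree ≤ T → dotF β (mono e) = l (ν e) := by
  classical
  letI : CommRing (Algebra.adjoin F3 (Set.range X)) :=
    Algebra.adjoinCommRingOfComm F3 (by
      rintro _ ⟨i, rfl⟩ _ ⟨j, rfl⟩; exact hcomm i j)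
  let y : Fin r → Algebra.adjoin F3 (Set.range X) :=
    fun i => ⟨X i, Algebra.subset_adjoin ⟨i, rfl⟩⟩
  obtain ⟨β, h1, h2⟩ := interp_act (Algebra.adjoin F3 (Set.range X)).val y
    (fun i => Subtype.ext (hX i)) (ν 0) l
  refine ⟨β, h1, fun e he => ?_⟩
  rw [h2]
  congr 1
  have key : ∀ n : ℕ, ∀ e : Fin r →₀ ℕ, e.degree = n → n ≤ T →
      (Algebra.adjoin F3 (Set.range X)).val (∏ i, y i ^ e i) (ν 0) = ν e := by
    intro n
    induction n with
    | zero =>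
      intro e he _
      have : e = 0 := (Finsupp.degree_eq_zero_iff e).1 he
      subst this
      simp
    | succ n ih =>
      intro e he hn
      have hne : e ≠ 0 := by rintro rfl; simp at he
      obtain ⟨i, hi⟩ := Finsupp.ne_iff.1 hne
      have hle : Finsupp.single i 1 ≤ e := by
        rw [Finsupp.single_le_iff]; simp at hi; omega
      obtain ⟨g, rfl⟩ := exists_add_of_le hle
      rw [add_comm] at he ⊢
      have hg : g.degree = n := by simpa using he
      rw [hν g i (by omega), ← ih g hg (by omega)]
      have : ∏ j, y j ^ (g + Finsupp.single i 1 : Fin r →₀ ℕ) j = y i * ∏ j, y j ^ g j := by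
        simp only [Finsupp.add_apply, pow_add, Finset.prod_mul_distrib]
        rw [mul_comm]
        congr 1
        rw [Finset.prod_eq_single i]
        · simp
        · intro j _ hj; simp [hj.symm]
        · simp
      rw [this, map_mul]
      rfl
  exact key _ e rfl he


/-! ### Flat extension -/

/-- The coordinate function. -/
def crd {r : ℕ} (i : Fin r) : Fn r := fun x => x i

lemma crd_eq {r : ℕ} (i : Fin r) : crd i = mono (Finsupp.single i 1) := by
  classical
  funext x
  rw [mono, Finset.prod_eq_single i]
  · simp [crd]
  · intro j _ hj; simp [hj.symm]
  · simp

lemma crd_mem {r : ℕ} (i : Fin r) : crd i ∈ PS r 1 := by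
  rw [crd_eq]; exact mono_mem (by simp)

lemma crd_cube {r : ℕ} (i : Fin r) : crd i * (crd i * crd i) = crd i := by
  funext x
  simp only [Pi.mul_apply, crd]
  generalize x i = y
  revert y; decide

lemma crd_mul_mem {r a : ℕ} (i : Fin r) {p : Fn r} (hp : p ∈ PS r a) :
    crd i * p ∈ PS r (a + 1) := by
  rw [mul_comm]; exact mul_mem_PS hp (crd_mem i)

lemma finrank_le_rk {r : ℕ} {γ : Fn r} {d : ℕ} (C : Submodule F3 (Fn r)) (h1 : C ≤ PS r d)
    (h2 : ∀ p ∈ C, p ∈ MK γ d d → p = 0) : finrank F3 C ≤ rk γ d := by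
  have b := Module.finBasis F3 C
  have := card_le_rk (γ := γ) (d := d) (fun i => (b i : Fn r)) (fun i => h1 (b i).2) (by
    intro c hc
    have h3 : ∑ i, c i • (b i : Fn r) = ((∑ i, c i • b i : C) : Fn r) := by simp
    rw [h3] at hc
    have h4 := h2 _ (Subtype.coe_prop _) hc
    have h5 : ∑ i, c i • b i = 0 := Subtype.ext h4
    exact Fintype.linearIndependent_iff.1 b.linearIndependent c h5)
  simpa using this

lemma exists_proj {r : ℕ} (K Q PT : Submodule F3 (Fn r)) (h : PT ≤ Q ⊔ K) :
    ∃ (C : Submodule F3 (Fn r)) (N : Fn r →ₗ[F3] C), C ≤ Q ∧ (∀ p ∈ C, p ∈ K → p = 0) ∧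
      (∀ c : C, N c = c) ∧ (∀ k ∈ K, N k = 0) ∧ ∀ p ∈ PT, p - (N p : Fn r) ∈ K := by
  obtain ⟨C0, hC0⟩ := Submodule.exists_isCompl (K ⊓ Q)
  have hdis : ∀ p ∈ C0 ⊓ Q, p ∈ K → p = 0 := by
    intro p hp hk
    exact Submodule.disjoint_def.1 hC0.disjoint p ⟨hk, hp.2⟩ hp.1
  obtain ⟨K', hK', hc⟩ := (Submodule.disjoint_def.2 fun p hk hp => hdis p hp hk :
    Disjoint K (C0 ⊓ Q)).exists_isCompl
  refine ⟨C0 ⊓ Q, (C0 ⊓ Q).projectionOnto K' hc.symm, inf_le_right, hdis, ?_, ?_, ?_⟩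
  · intro c; exact Submodule.projectionOnto_apply_left _ c
  · intro k hk
    exact Submodule.projectionOnto_apply_of_mem_right _ (hK' hk)
  · intro p hp
    obtain ⟨q, hq, k, hk, rfl⟩ := Submodule.mem_sup.1 (h hp)
    have htop : q ∈ (K ⊓ Q) ⊔ C0 := by rw [hC0.sup_eq_top]; trivial
    obtain ⟨k', hk', c, hc', rfl⟩ := Submodule.mem_sup.1 htop
    have hcQ : c ∈ C0 ⊓ Q := ⟨hc', by simpa using Submodule.sub_mem _ hq hk'.2⟩
    rw [map_add, map_add, Submodule.projectionOnto_apply_of_mem_right _ (hK' hk),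
      Submodule.projectionOnto_apply_of_mem_right _ (hK' hk'.1),
      Submodule.projectionOnto_apply_of_mem_left _ hcQ]
    have : k' + c + k - (((0 + ⟨c, hcQ⟩ + 0 : (C0 ⊓ Q : Submodule F3 (Fn r))) : Fn r)) = k' + k := by
      simp only [zero_add, add_zero]; abel
    rw [this]
    exact Submodule.add_mem _ hk'.1 hk

lemma flat_ext {r : ℕ} {γ : Fn r} {d s : ℕ} (hrk : rk γ d ^ 2 < 3 ^ (s + 1))
    (hd : 2 * s + 3 ≤ d) :
    ∃ β : Fn r, supp β ≤ rk γ d ∧ ∀ p ∈ PS r (d - s), LF (γ - β) p = 0 := by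
  set T := d - s with hT
  have hPS : ∀ a, s ≤ a → a ≤ T → PS r a ≤ PS r s ⊔ MK γ T s := by
    intro a ha
    induction a, ha using Nat.le_induction with
    | base => intro _; exact le_sup_left
    | succ a ha ih =>
      intro haT
      refine (flat_PS hrk (by omega) (by omega) (by omega : a + 1 ≤ d)).trans (sup_le ?_ ?_)
      · exact ih (by omega)
      · exact le_sup_of_le_right (MK_mono (by omega) (by omega))
  obtain ⟨C, N, hCs, hCK, hNC, hNK, hN⟩ := exists_proj (MK γ T s) (PS r s) (PS r T)
    (hPS T (by omega) le_rfl)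
  -- multiplication by a coordinate preserves the kernel
  have hmul : ∀ (i : Fin r) (a : ℕ) (p : Fn r), a + 1 ≤ T → p ∈ PS r a → p ∈ MK γ T s →
      crd i * p ∈ MK γ T s := by
    intro i a p ha hp hk
    have h1 : p ∈ MK γ a s := ⟨hp, hk.2⟩
    have h2 : p ∈ MK γ a (s + 1) :=
      MK_ext hrk (b := s + 1) (by omega) le_rfl (by omega) h1
    rw [mul_comm]
    exact MK_mono ha le_rfl (mul_mem_MK h2 (crd_mem i))
  have hstep : ∀ (i : Fin r) (a : ℕ) (p : Fn r), s ≤ a → a + 1 ≤ T → p ∈ PS r a →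
      N (crd i * (N p : Fn r)) = N (crd i * p) := by
    intro i a p hs ha hp
    have h1 : p - (N p : Fn r) ∈ MK γ T s := hN p (PS_mono (by omega) hp)
    have h2 : p - (N p : Fn r) ∈ PS r a :=
      Submodule.sub_mem _ hp (PS_mono hs (hCs (N p).2))
    have h3 := hNK _ (hmul i a _ ha h2 h1)
    rw [mul_sub, map_sub, sub_eq_zero] at h3
    exact h3.symm
  let X : Fin r → Module.End F3 C := fun i =>
    N ∘ₗ (LinearMap.mulLeft F3 (crd i)) ∘ₗ C.subtype
  have hXN : ∀ (i : Fin r) (a : ℕ) (p : Fn r), s ≤ a → a + 1 ≤ T → p ∈ PS r a →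
      X i (N p) = N (crd i * p) := hstep
  have hXc : ∀ (i : Fin r) (c : C), X i c = N (crd i * (c : Fn r)) := fun _ _ => rfl
  obtain ⟨β, hβ1, hβ2⟩ := interp_ops X
    (by
      intro i j
      ext1 c
      rw [Module.End.mul_apply, Module.End.mul_apply, hXc j c, hXc i c,
        hXN i (s + 1) _ (by omega) (by omega) (crd_mul_mem j (hCs c.2)),
        hXN j (s + 1) _ (by omega) (by omega) (crd_mul_mem i (hCs c.2)), mul_left_comm])
    (by
      intro i
      ext1 c
      rw [pow_succ, pow_two, Module.End.mul_apply, Module.End.mul_apply, hXc i c,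
        hXN i (s + 1) _ (by omega) (by omega) (crd_mul_mem i (hCs c.2)),
        hXN i (s + 2) _ (by omega) (by omega) (crd_mul_mem i (crd_mul_mem i (hCs c.2))),
show crd i * (crd i * (crd i * (c : Fn r))) = crd i * (crd i * crd i) * (c : Fn r) by ring,
        crd_cube])
    (LF γ ∘ₗ C.subtype) T (fun e => N (mono e))
    (by
      intro e i he
      rw [hXN i (T - 1) _ (by omega) (by omega) (mono_mem (by omega)), mono_add, ← crd_eq, mul_comm])
  refine ⟨β, hβ1.trans (finrank_le_rk C (hCs.trans (PS_mono (by omega))) ?_), ?_⟩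
  · intro p hp hk
    exact hCK p hp ⟨PS_mono (by omega) (hCs hp), fun q hq => hk.2 q (PS_mono (by omega) hq)⟩
  · have : PS r T ≤ LinearMap.ker (LF (γ - β)) := by
      rw [PS, Submodule.span_le]
      rintro _ ⟨e, he, rfl⟩
      have h1 := hβ2 e he
      have h2 := (hN (mono e) (mono_mem he)).2 1 (one_mem_PS _ _)
      rw [mul_one, map_sub, sub_eq_zero] at h2
      show LF (γ - β) (mono e) = 0
      have h3 : LF (γ - β) (mono e) = LF γ (mono e) - dotF β (mono e) := by
        simp [LF_apply, dotF, sub_mul]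
      rw [h3, h1, h2]
      exact sub_self _
    exact fun p hp => this hp

lemma structure_thm {r : ℕ} {γ : Fn r} {d s k : ℕ} (h1 : rk γ d ^ 2 < 3 ^ (s + 1))
    (hd : 2 * s + 3 ≤ d) (hk : 2 * k ≤ d - s + 1) (h2 : 4 * rk γ d ^ 2 < 3 ^ (k - 1)) :
    ∃ g ∈ dualSet r (PolySet r (2 * d)), hammingD γ g ≤ rk γ d := by
  obtain ⟨β, hβ1, hβ2⟩ := flat_ext h1 hd
  refine ⟨γ - β, ?_, ?_⟩
  · intro h hh
    refine vanish (d := d) hβ2 hk ?_ h ((mem_PolySet_iff h).1 hh)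
    have := rk_sub_le γ β d
    calc rk (γ - β) d ^ 2 ≤ (2 * rk γ d) ^ 2 := Nat.pow_le_pow_left (by omega) 2
      _ = 4 * rk γ d ^ 2 := by ring
      _ < _ := h2
  · refine le_trans (le_of_eq ?_) hβ1
    unfold hammingD supp
    congr 1
    ext x
    simp only [Finset.mem_filter, Finset.mem_univ, true_and, Pi.sub_apply, ne_eq]
    rw [eq_comm, sub_eq_self]


/-! ### The Gauss sum -/

lemma omega_prim : IsPrimitiveRoot ω 3 := by
  have := Complex.isPrimitiveRoot_exp 3 (by norm_num)
  simpa [ω] using this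

/-- The additive character attached to `ω`. -/
noncomputable def psi : AddChar F3 ℂ := AddChar.zmodChar 3 omega_prim.pow_eq_one

lemma psi_apply (a : F3) : psi a = ω ^ a.val := AddChar.zmodChar_apply _ a

lemma psi_eq_one {a : F3} (h : psi a = 1) : a = 0 := by
  rw [psi_apply, omega_prim.pow_eq_one_iff_dvd] at h
  have := ZMod.val_lt a
  have h0 : a.val = 0 := Nat.eq_zero_of_dvd_of_lt h this
  exact (ZMod.val_eq_zero a).1 h0

lemma gauss {G : Type*} [AddCommGroup G] [Fintype G] (B : G →+ G →+ F3)
    (hB : ∀ p q, B p q = B q p) (κ : ℕ) (hκ : ∀ s : Finset G, (∀ h ∈ s, B h = 0) → s.card ≤ κ) :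
    ‖∑ p, psi (B p p)‖ ^ 2 ≤ Fintype.card G * κ := by
  classical
  have h1 : (∑ p, psi (B p p)) * (starRingEnd ℂ) (∑ p, psi (B p p)) =
      ∑ h, psi (B h h) * ∑ q, psi (2 * B h q) := by
    rw [map_sum, Finset.sum_mul_sum, Finset.sum_comm]
    simp_rw [Finset.mul_sum]
    rw [Finset.sum_comm (s := Finset.univ) (t := Finset.univ)
      (f := fun h q => psi (B h h) * psi (2 * B h q))]
    refine Finset.sum_congr rfl fun q _ => ?_
    rw [← Equiv.sum_comp (Equiv.addRight q)]
    refine Finset.sum_congr rfl fun h _ => ?_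
    rw [← AddChar.map_neg_eq_conj, ← AddChar.map_add_eq_mul, ← AddChar.map_add_eq_mul]
    congr 1
    simp only [Equiv.coe_addRight, map_add, AddMonoidHom.add_apply]
    rw [hB q h]; ring
  have h2 : ∀ h, (∑ q, psi (2 * B h q) : ℂ) = if B h = 0 then (Fintype.card G : ℂ) else 0 := by
    intro h
    let χ : AddChar G ℂ := psi.compAddMonoidHom ((AddMonoidHom.mulLeft (2 : F3)).comp (B h))
    have h3 : ∑ q, psi (2 * B h q) = ∑ q, χ q := rfl
    rw [h3, AddChar.sum_eq_ite]
    have h4 : χ = 0 ↔ B h = 0 := by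
      constructor
      · intro hχ
        ext q
        have h5 : psi (2 * B h q) = 1 := by
          have := DFunLike.congr_fun hχ q
          simpa [χ] using this
        have h6 := psi_eq_one h5
        rw [AddMonoidHom.zero_apply]
        generalize B h q = z at h6
        revert z; decide
      · intro hB0
        ext q
        simp [χ, hB0]
    simp only [h4]
  have h3 : ‖∑ p, psi (B p p)‖ ^ 2 =
      ‖(∑ p, psi (B p p)) * (starRingEnd ℂ) (∑ p, psi (B p p))‖ := by
    rw [norm_mul, RCLike.norm_conj, pow_two]
  rw [h3, h1]
  simp_rw [h2]
  calc ‖∑ h, psi (B h h) * if B h = 0 then (Fintype.card G : ℂ) else 0‖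
      ≤ ∑ h, ‖psi (B h h) * if B h = 0 then (Fintype.card G : ℂ) else 0‖ := norm_sum_le _ _
    _ = ∑ h, if B h = 0 then (Fintype.card G : ℝ) else 0 := by
        refine Finset.sum_congr rfl fun h _ => ?_
        rw [norm_mul, AddChar.norm_apply, one_mul]
        split_ifs <;> simp
    _ = (Finset.univ.filter fun h => B h = 0).card * (Fintype.card G : ℝ) := by
        rw [← Finset.sum_filter, Finset.sum_const, nsmul_eq_mul]
    _ ≤ Fintype.card G * κ := by
        rw [mul_comm]
        gcongr
        exact hκ _ fun h hh => by simpa using hh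

lemma card_aux {K V W : Type*} [Field K] [Fintype K] [AddCommGroup V] [Module K V] [Fintype V]
    [AddCommGroup W] [Module K W] (f : V →ₗ[K] W) (s : Finset V) (hs : ∀ v ∈ s, f v = 0) :
    s.card * Fintype.card K ^ finrank K (LinearMap.range f) ≤ Fintype.card V := by
  classical
  have : FiniteDimensional K V := Module.Finite.of_finite
  have e1 := LinearMap.finrank_range_add_finrank_ker f
  have h1 : s.card ≤ Nat.card (LinearMap.ker f) := by
    rw [← Fintype.card_coe, ← Nat.card_eq_fintype_card]
    exact Nat.card_le_card_of_injective (fun v : s => (⟨v.1, hs _ v.2⟩ : LinearMap.ker f))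
      fun a b h => Subtype.ext (congrArg (fun z => (z.1 : V)) h)
  have h2 : Nat.card (LinearMap.ker f) = Fintype.card K ^ finrank K (LinearMap.ker f) := by
    rw [Module.natCard_eq_pow_finrank (K := K), Nat.card_eq_fintype_card]
  rw [Module.card_eq_pow_finrank (K := K) (V := V), ← e1, pow_add, mul_comm]
  exact Nat.mul_le_mul_left _ (h2 ▸ h1)

lemma bias_le {r d : ℕ} (α : Fn r) :
    ‖(∑ p ∈ polyFinset r d, ω ^ (dotF α (fun x => p x ^ 2)).val) /
      ((polyFinset r d).card : ℂ)‖ ^ 2 * 3 ^ rk α d ≤ 1 := by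
  classical
  have hmem : ∀ p, p ∈ polyFinset r d ↔ p ∈ PS r d := by
    intro p
    rw [← mem_PolySet_iff]; simp [polyFinset]
  have : Fintype (PS r d) := Fintype.ofFinite _
  have hcard : (polyFinset r d).card = Fintype.card (PS r d) :=
    (Fintype.card_of_subtype _ hmem).symm
  let B : PS r d →+ PS r d →+ F3 :=
    { toFun := fun p => (BF α d p).toAddMonoidHom
      map_zero' := by ext; simp
      map_add' := by intros; ext; simp }
  have hsum : ∑ p ∈ polyFinset r d, ω ^ (dotF α (fun x => p x ^ 2)).val =
      ∑ p : PS r d, psi (B p p) := by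
    rw [Finset.sum_subtype _ hmem]
    refine Finset.sum_congr rfl fun p _ => ?_
    rw [psi_apply]
    have : (fun x => (p : Fn r) x ^ 2) = (p : Fn r) * p := by
      funext x; simp [pow_two]
    rw [this]; rfl
  have hpos : 0 < Fintype.card (PS r d) := Fintype.card_pos
  have hc : ∀ s : Finset (PS r d), (∀ h ∈ s, B h = 0) →
      s.card * 3 ^ rk α d ≤ Fintype.card (PS r d) := by
    intro s hs
    have := card_aux (BF α d) s (fun v hv => by
      ext q
      exact DFunLike.congr_fun (hs v hv) q)
    rwa [ZMod.card] at this
  have hg := gauss B (fun p q => by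
    show LF α ((p : Fn r) * q) = LF α ((q : Fn r) * p)
    rw [mul_comm]) (Finset.univ.filter fun h => B h = 0).card (fun s hs =>
      Finset.card_le_card fun h hh => by simpa using hs h hh)
  have hc' := hc (Finset.univ.filter fun h => B h = 0) (fun h hh => by simpa using hh)
  rw [hsum, hcard, norm_div, Complex.norm_natCast, div_pow]
  have hn : (0 : ℝ) < Fintype.card (PS r d) := by exact_mod_cast hpos
  rw [div_mul_eq_mul_div, div_le_one (by positivity)]
  calc _ ≤ (Fintype.card (PS r d) * ((Finset.univ.filter fun h => B h = 0).card : ℝ)) * 3 ^ rk α d := by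
        gcongr
    _ = Fintype.card (PS r d) * (((Finset.univ.filter fun h => B h = 0).card : ℝ) * 3 ^ rk α d) := by
        ring
    _ ≤ Fintype.card (PS r d) * Fintype.card (PS r d) := by
        gcongr
        exact_mod_cast hc'
    _ = _ := by ring

/-! ### Parameters -/

lemma rk_large {r d : ℕ} (hd : 100 ≤ d) (α : Fn r)
    (h : ∀ g ∈ dualSet r (PolySet r (2 * d)), (3 : ℝ) ^ ((d : ℝ) / 2) < (hammingD α g : ℝ)) :
    (3 : ℝ) ^ ((d : ℝ) / 9) ≤ rk α d := by
  by_contra! hlt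
  have hdR : (100 : ℝ) ≤ d := by exact_mod_cast hd
  have hsq : (rk α d : ℝ) ^ 2 ≤ (3 : ℝ) ^ (2 * (d : ℝ) / 9) := by
    have : (3 : ℝ) ^ (2 * (d : ℝ) / 9) = ((3 : ℝ) ^ ((d : ℝ) / 9)) ^ 2 := by
      rw [← Real.rpow_natCast, ← Real.rpow_mul (by norm_num)]
      congr 1; push_cast; ring
    rw [this]
    gcongr
  obtain ⟨s, hs⟩ : ∃ s, d / 4 = s + 1 := ⟨d / 4 - 1, by omega⟩
  obtain ⟨k, hk⟩ : ∃ k, 3 * d / 8 = k + 1 := ⟨3 * d / 8 - 1, by omega⟩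
  have b1 : (d : ℝ) ≤ 4 * ((s + 1 : ℕ) : ℝ) + 3 := by
    exact_mod_cast (by omega : d ≤ 4 * (s + 1) + 3)
  have b2 : 3 * (d : ℝ) ≤ 8 * (k : ℝ) + 15 := by
    exact_mod_cast (by omega : 3 * d ≤ 8 * k + 15)
  have h1 : rk α d ^ 2 < 3 ^ (s + 1) := by
    have : (rk α d : ℝ) ^ 2 < (3 : ℝ) ^ (s + 1) := by
      refine hsq.trans_lt ?_
      rw [← Real.rpow_natCast]
      exact Real.rpow_lt_rpow_of_exponent_lt (by norm_num) (by linarith)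
    exact_mod_cast this
  have h2 : 4 * rk α d ^ 2 < 3 ^ (k + 1 - 1) := by
    have : 4 * (rk α d : ℝ) ^ 2 < (3 : ℝ) ^ k := by
      calc 4 * (rk α d : ℝ) ^ 2 ≤ 4 * (3 : ℝ) ^ (2 * (d : ℝ) / 9) := by gcongr
        _ < 9 * (3 : ℝ) ^ (2 * (d : ℝ) / 9) := by
          have : (0 : ℝ) < (3 : ℝ) ^ (2 * (d : ℝ) / 9) := by positivity
          linarith
        _ = (3 : ℝ) ^ (2 + 2 * (d : ℝ) / 9) := by
          rw [Real.rpow_add (by norm_num)]; norm_num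
        _ ≤ (3 : ℝ) ^ k := by
          rw [← Real.rpow_natCast]
          exact Real.rpow_le_rpow_of_exponent_le (by norm_num) (by linarith)
    simpa using (by exact_mod_cast this : 4 * rk α d ^ 2 < 3 ^ k)
  obtain ⟨g, hg1, hg2⟩ := structure_thm h1 (by omega) (by omega : 2 * (k + 1) ≤ d - s + 1) h2
  have h3 := h g hg1
  have h4 : (hammingD α g : ℝ) ≤ rk α d := by exact_mod_cast hg2
  have h5 : (3 : ℝ) ^ ((d : ℝ) / 9) ≤ (3 : ℝ) ^ ((d : ℝ) / 2) :=
    Real.rpow_le_rpow_of_exponent_le (by norm_num) (by linarith)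
  linarith

end LowRank

/-- There exist `c > 0` and `d₀` such that for all `d ≥ d₀`, `r`, and `α : F₃^r → F₃`
with `Δ(α, P_{r,2d}^⊥) > 3^{d/2}`, one has `|E_{p ∈ P_{r,d}}[ω^{⟨α,p²⟩}]| ≤ 3^{−c·3^{d/9}}`. -/
theorem stmt9 :
    ∃ (c : ℝ) (d₀ : ℕ), 0 < c ∧
      ∀ d : ℕ, d₀ ≤ d → ∀ r : ℕ, ∀ α : Fn r,
        (∀ g ∈ dualSet r (PolySet r (2 * d)), (3 : ℝ) ^ ((d : ℝ) / 2) < (hammingD α g : ℝ)) →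
        ‖(∑ p ∈ polyFinset r d, ω ^ (dotF α (fun x => p x ^ 2)).val) /
            ((polyFinset r d).card : ℂ)‖
          ≤ (3 : ℝ) ^ (-(c * (3 : ℝ) ^ ((d : ℝ) / 9))) := by
  refine ⟨1 / 2, 100, by norm_num, fun d hd r α h => ?_⟩
  have h1 := LowRank.rk_large hd α h
  have h2 := LowRank.bias_le (d := d) α
  set z := ‖(∑ p ∈ polyFinset r d, ω ^ (dotF α (fun x => p x ^ 2)).val) /
      ((polyFinset r d).card : ℂ)‖ with hz
  have hz0 : 0 ≤ z := norm_nonneg _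
  refine le_of_sq_le_sq ?_ (by positivity)
  have h3 : ((3 : ℝ) ^ (-(1 / 2 * (3 : ℝ) ^ ((d : ℝ) / 9)))) ^ 2 =
      (3 : ℝ) ^ (-((3 : ℝ) ^ ((d : ℝ) / 9))) := by
    rw [← Real.rpow_natCast, ← Real.rpow_mul (by norm_num)]
    congr 1; push_cast; ring
  rw [h3]
  calc z ^ 2 ≤ 1 / 3 ^ LowRank.rk α d := by
        rw [le_div_iff₀ (by positivity)]; exact h2
    _ = (3 : ℝ) ^ (-(LowRank.rk α d : ℝ)) := by
        rw [Real.rpow_neg (by norm_num), Real.rpow_natCast, one_div]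
    _ ≤ _ := Real.rpow_le_rpow_of_exponent_le (by norm_num) (by linarith)
end
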